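/- Let G be the fundamental group of a graph of groups with vertex groups (G_v)_{v∈V} and edge groups (G_e)_{e∈E}, and let F be a family of subgroups of G. Then cat_F(G) ≤ sup_{v∈V} cat_{F|_{G_v}}(G_v) + sup_{e∈E} ( cat_{F|_{G_e}}(G_e) + 1 ). -/

import Mathlib

open scoped Topology
open CategoryTheory

noncomputable section

/-- A *family of subgroups* of a group `G`: a non-empty set of subgroups that is closed under
conjugation and under passing to subgroups. -/
structure IsSubgroupFamily {G : Type} [Group G] (F : Set (Subgroup G)) : Prop where
  nonempty : F.Nonempty
  conj_mem : ∀ H ∈ F, ∀ g : G, H.map (MulAut.conj g).toMonoidHom ∈ F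
  mem_of_le : ∀ H ∈ F, ∀ K : Subgroup G, K ≤ H → K ∈ F

/-- The restriction `F|_H = {F ⊆ H : F ∈ F}` of a family of subgroups of `G` to a subgroup `H`,
viewed as a set of subgroups of `H`. -/
def restrictFamily {G : Type} [Group G] (F : Set (Subgroup G)) (H : Subgroup G) :
    Set (Subgroup H) :=
  {K : Subgroup H | K.map H.subtype ∈ F}

/-- The closed unit disk `Dⁿ ⊆ ℝⁿ`. -/
def UnitDisk (n : ℕ) : Set (EuclideanSpace ℝ (Fin n)) := Metric.closedBall 0 1

/-- The unit sphere `Sⁿ⁻¹ ⊆ ℝⁿ` (the boundary of `Dⁿ`). -/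
def UnitSphere (n : ℕ) : Set (EuclideanSpace ℝ (Fin n)) := Metric.sphere 0 1

/-- A `G`-CW-complex, presented by its skeletal data: for each `n`, a set `cells n` of
`G`-orbit representatives of the open `n`-cells, the stabiliser `stab n i` of the representative
`i`, and an equivariant characteristic map `G/Gᵢ × Dⁿ → X` for each representative.
The open cells partition the space, the attaching maps send the boundary spheres to cells of
strictly smaller dimension, and the space carries the weak topology with respect to the closed
cells.  (By equivariance, a group element fixing a cell setwise fixes it pointwise, so this
presents exactly a `G`-CW-complex, together with a choice of orbit representatives of cells.) -/
structure GCWComplex (G : Type) [Group G] : Type 1 where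
  space : Type
  [topology : TopologicalSpace space]
  [action : MulAction G space]
  t2 : T2Space space
  continuous_smul : ∀ g : G, Continuous fun x : space => g • x
  /-- `G`-orbit representatives of the `n`-cells -/
  cells : ℕ → Type
  /-- the stabiliser of the chosen orbit representative -/
  stab : ∀ n, cells n → Subgroup G
  /-- the (curried) equivariant characteristic map of the orbit of cells indexed by `i` -/
  charMap : ∀ n (i : cells n), (G ⧸ stab n i) → UnitDisk n → space
  charMap_continuous : ∀ n i c, Continuous (charMap n i c)
  charMap_equivariant : ∀ n i (g : G) (c : G ⧸ stab n i) z,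
    charMap n i (g • c) z = g • charMap n i c z
  /-- boundary spheres are attached to cells of strictly smaller dimension -/
  sphere_le : ∀ n i (c : G ⧸ stab n i) (z : UnitDisk n),
    ‖(z : EuclideanSpace ℝ (Fin n))‖ = 1 →
    ∃ (m : ℕ) (_ : m < n) (j : cells m) (c' : G ⧸ stab m j) (w : UnitDisk m),
      ‖(w : EuclideanSpace ℝ (Fin m))‖ < 1 ∧ charMap m j c' w = charMap n i c z
  /-- the open cells partition the space -/
  partition : ∀ x : space,
    ∃! p : Σ (n : ℕ) (i : cells n), (G ⧸ stab n i) × UnitDisk n,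
      ‖(p.2.2.2 : EuclideanSpace ℝ (Fin p.1))‖ < 1 ∧ charMap p.1 p.2.1 p.2.2.1 p.2.2.2 = x
  /-- the space carries the weak topology determined by the closed cells -/
  weak_topology : ∀ A : Set space, IsClosed A ↔ ∀ n i c, IsClosed (charMap n i c ⁻¹' A)

attribute [instance] GCWComplex.topology GCWComplex.action

namespace GCWComplex

variable {G : Type} [Group G]

/-- The `G`-CW-complex `X` has dimension at most `c`. -/
def DimLE (X : GCWComplex G) (c : ℕ∞) : Prop :=
  ∀ n : ℕ, c < (n : ℕ∞) → IsEmpty (X.cells n)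

/-- The dimension of a `G`-CW-complex. -/
def dim (X : GCWComplex G) : ℕ∞ :=
  sInf {c : ℕ∞ | X.DimLE c}

/-- All cell stabilisers of `X` belong to the family `F` (for a conjugation-closed family `F`
this says exactly that `X` has isotropy in `F`). -/
def IsotropyIn (X : GCWComplex G) (F : Set (Subgroup G)) : Prop :=
  ∀ n i, X.stab n i ∈ F

/-- The `G`-CW-complex `X` is free. -/
def IsFree (X : GCWComplex G) : Prop :=
  ∀ n i, X.stab n i = ⊥

end GCWComplex

/-- A `G`-equivariant continuous map. -/
structure GMap (G : Type) [Group G] (X Y : Type) [TopologicalSpace X] [TopologicalSpace Y]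
    [MulAction G X] [MulAction G Y] where
  toFun : X → Y
  continuous_toFun : Continuous toFun
  equivariant : ∀ (g : G) (x : X), toFun (g • x) = g • toFun x

/-- `cat^G_F(X)`: the infimum of all `n` for which there exist an `n`-dimensional
`G`-CW-complex `N` all of whose cell stabilisers lie in `F` and a `G`-map `X → N`. -/
def gcat (G : Type) [Group G] (F : Set (Subgroup G)) (X : Type) [TopologicalSpace X]
    [MulAction G X] : ℕ∞ :=
  sInf {c : ℕ∞ | ∃ N : GCWComplex G, N.IsotropyIn F ∧ N.DimLE c ∧
    Nonempty (GMap G X N.space)}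

/-- A CW-structure on a topological space (the non-equivariant case of a `G`-CW-structure). -/
structure CWStructure (X : Type) [TopologicalSpace X] : Type 1 where
  t2 : T2Space X
  cells : ℕ → Type
  charMap : ∀ n, cells n → UnitDisk n → X
  charMap_continuous : ∀ n i, Continuous (charMap n i)
  sphere_le : ∀ n i (z : UnitDisk n), ‖(z : EuclideanSpace ℝ (Fin n))‖ = 1 →
    ∃ (m : ℕ) (_ : m < n) (j : cells m) (w : UnitDisk m),
      ‖(w : EuclideanSpace ℝ (Fin m))‖ < 1 ∧ charMap m j w = charMap n i z
  partition : ∀ x : X, ∃! p : Σ (n : ℕ) (_ : cells n), UnitDisk n,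
      ‖(p.2.2 : EuclideanSpace ℝ (Fin p.1))‖ < 1 ∧ charMap p.1 p.2.1 p.2.2 = x
  weak_topology : ∀ A : Set X, IsClosed A ↔ ∀ n i, IsClosed (charMap n i ⁻¹' A)

/-- The CW-complex has dimension at most `c`. -/
def CWStructure.DimLE {X : Type} [TopologicalSpace X] (C : CWStructure X) (c : ℕ∞) : Prop :=
  ∀ n : ℕ, c < (n : ℕ∞) → IsEmpty (C.cells n)

/-- A CW-model of the classifying space `BG`: an aspherical path-connected CW-complex with
fundamental group isomorphic to `G`. -/
structure ClassifyingModel (G : Type) [Group G] : Type 1 where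
  space : Type
  [topology : TopologicalSpace space]
  cw : CWStructure space
  pathConnected : PathConnectedSpace space
  basepoint : space
  /-- all higher homotopy groups vanish -/
  aspherical : ∀ n : ℕ, 2 ≤ n → Subsingleton (HomotopyGroup.Pi n space basepoint)
  iso : FundamentalGroup space basepoint ≃* G

attribute [instance] ClassifyingModel.topology

/-- The geometric dimension of `G`: the infimum of the dimensions of CW-models of `BG`. -/
def gd (G : Type) [Group G] : ℕ∞ :=
  sInf {c : ℕ∞ | ∃ Y : ClassifyingModel G, Y.cw.DimLE c}

attribute [local instance] Path.Homotopic.setoid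

/-- The element of the fundamental group determined by a homotopy class of loops. -/
def pathToPi1 {Y : Type} [TopologicalSpace Y] {y : Y} (p : Path.Homotopic.Quotient y y) :
    FundamentalGroup Y y :=
  FundamentalGroup.fromPath (X := TopCat.of Y) p

/-- The condition on a member `U` of an open cover realising `cat_F`: for every `y ∈ U`, the
image of `π₁(U, y) → π₁(Y, y)`, transported to the basepoint `y₀` along any path and compared
with `F` via the identification `e`, is contained in a member of `F`.  (For a subgroup-closed
family `F` this says exactly that the image subgroup belongs to `F`; for a conjugation-closed
family the condition is independent of the chosen path.) -/
def FCoverCondition {Y : Type} [TopologicalSpace Y] {G : Type} [Group G] (y₀ : Y)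
    (e : FundamentalGroup Y y₀ ≃* G) (F : Set (Subgroup G)) (U : Set Y) : Prop :=
  ∀ y ∈ U, ∀ q : Path y₀ y, ∃ H ∈ F, ∀ p : Path y y, (∀ t, p t ∈ U) →
    e (pathToPi1 (Path.Homotopic.Quotient.trans ⟦q⟧
      (Path.Homotopic.Quotient.trans ⟦p⟧ ⟦q.symm⟧))) ∈ H

/-- `cat_F(Y)` for a space `Y`, with respect to an identification `e : π₁(Y, y₀) ≅ G` and a set
`F` of subgroups of `G`: the infimum of all `n` such that `Y` admits a cover by `n + 1` open
subsets whose `π₁`-images lie in `F`. -/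
def catSpace {Y : Type} [TopologicalSpace Y] {G : Type} [Group G] (y₀ : Y)
    (e : FundamentalGroup Y y₀ ≃* G) (F : Set (Subgroup G)) : ℕ∞ :=
  sInf {c : ℕ∞ | ∃ n : ℕ, c = (n : ℕ∞) ∧ ∃ U : Fin (n + 1) → Set Y,
    (∀ i, IsOpen (U i)) ∧ (∀ y : Y, ∃ i, y ∈ U i) ∧ ∀ i, FCoverCondition y₀ e F (U i)}

/-- `cat_F(G) := cat_F(BG)`; the value is independent of the chosen CW-model of `BG`, so we take
the infimum over all models. -/
def catGroup (G : Type) [Group G] (F : Set (Subgroup G)) : ℕ∞ :=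
  sInf {c : ℕ∞ | ∃ Y : ClassifyingModel G, c = catSpace Y.basepoint Y.iso F}

/-!
Milnor's infinite join of copies of `G` is a contractible space `EG` with a free `G`-action, and
its quotient is an aspherical CW-complex. A cover of `BG` as in the definition of `cat_F` pulls back
to a cover of `EG` by `n + 1` admissible sets: open invariant sets in which each point `x` can be
joined only to those `g • x` for which `g` lies in some member of `F`. The converse holds as well,
and covers of any other model `Y` of `BG` are compared with covers of `EG` through a map `EG → Y`
inducing the given isomorphism on fundamental groups; it is built simplex by simplex, since the
higher homotopy groups of `Y` vanish.

In the same way there is a `G`-map from `EG` to the contractible complex `X`. The stars of the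
vertices of `X`, with the midpoints of the edges removed, are disjoint and permuted by `G` like the
cosets of the vertex groups, so admissible covers for the vertex groups induce `n + 1` admissible
sets which cover the preimage of all stars. The midpoints lie in the open edges, which are treated
in the same way with the edge groups. The two collections of sets together cover `EG`.
-/

/-! ### Milnor's infinite join -/

/-- The vertex set `S × ℕ` of the infinite join `S * S * ⋯` has the colouring `Prod.snd`; its
simplices are the *rainbow* sets, which contain at most one vertex of each colour. -/
def IsRainbow {S : Type*} (s : Set (S × ℕ)) : Prop := Set.InjOn Prod.snd s

/-- The infinite join `S * S * ⋯` of a set `S` with itself (Milnor's construction), with the weak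
topology: formal convex combinations of vertices `(a, n) ∈ S × ℕ` with rainbow support. -/
structure MilnorJoin (S : Type*) extends Convexity.StdSimplex ℝ (S × ℕ) where
  isRainbow : IsRainbow (weights.support : Set (S × ℕ))

namespace MilnorJoin

variable {S T : Type*}

@[ext] theorem ext {x y : MilnorJoin S} (h : ∀ p, x.weights p = y.weights p) : x = y := by
  cases x; cases y
  congr
  exact Convexity.StdSimplex.ext (Finsupp.ext h)

theorem weights_nonneg (x : MilnorJoin S) (p : S × ℕ) : 0 ≤ x.weights p := x.nonneg p

theorem weights_pos {x : MilnorJoin S} {p : S × ℕ} (hp : p ∈ x.weights.support) :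
    0 < x.weights p :=
  (x.weights_nonneg p).lt_of_ne' (Finsupp.mem_support_iff.1 hp)

theorem sum_weights_of_support_subset {x : MilnorJoin S} {s : Finset (S × ℕ)}
    (h : x.weights.support ⊆ s) : ∑ p ∈ s, x.weights p = 1 := by
  rw [← x.total, Finsupp.sum_of_support_subset _ h _ fun _ _ => rfl]

/-- The simplices of the infinite join. -/
abbrev Face (S : Type*) : Type _ := {s : Finset (S × ℕ) // IsRainbow (s : Set (S × ℕ))}

/-- The inclusion of a closed simplex into the infinite join. -/
def ofFace (s : Face S) (w : stdSimplex ℝ s.1) : MilnorJoin S where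
  weights := (Finsupp.equivFunOnFinite.symm w).embDomain (.subtype _)
  nonneg p := by
    by_cases hp : p ∈ Set.range (Function.Embedding.subtype (· ∈ s.1))
    · obtain ⟨q, rfl⟩ := hp
      rw [Finsupp.embDomain_apply_self]
      exact w.2.1 q
    · exact (Finsupp.embDomain_of_notMem_range _ _ _ hp).ge
  total := by
    rw [Finsupp.sum_embDomain, Finsupp.sum_fintype _ _ fun _ => rfl]
    exact w.2.2
  isRainbow := s.2.mono fun p hp => by
    rw [Finsupp.support_embDomain] at hp
    obtain ⟨q, -, rfl⟩ := Finset.mem_map.1 hp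
    exact q.2

theorem ofFace_apply (s : Face S) (w : stdSimplex ℝ s.1) (p : s.1) :
    (ofFace s w).weights p = w p :=
  Finsupp.embDomain_apply_self _ _ p

theorem support_ofFace_subset (s : Face S) (w : stdSimplex ℝ s.1) :
    (ofFace s w).weights.support ⊆ s.1 := fun p hp => by
  rw [ofFace, Finsupp.support_embDomain] at hp
  obtain ⟨q, -, rfl⟩ := Finset.mem_map.1 hp
  exact q.2

theorem ofFace_apply_of_notMem (s : Face S) (w : stdSimplex ℝ s.1) {p : S × ℕ} (hp : p ∉ s.1) :
    (ofFace s w).weights p = 0 :=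
  Finsupp.notMem_support_iff.1 fun h => hp (support_ofFace_subset s w h)

/-- The barycentric coordinates of a point with respect to a face containing it. -/
def toFace (x : MilnorJoin S) (s : Finset (S × ℕ)) (h : x.weights.support ⊆ s) : stdSimplex ℝ s :=
  ⟨fun p => x.weights p, fun p => x.weights_nonneg p,
    (Finset.sum_coe_sort s x.weights).trans (sum_weights_of_support_subset h)⟩

theorem ofFace_toFace (x : MilnorJoin S) (s : Face S) (h : x.weights.support ⊆ s.1) :
    ofFace s (x.toFace s.1 h) = x := by
  ext p
  by_cases hp : p ∈ s.1
  · exact ofFace_apply s _ ⟨p, hp⟩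
  · rw [ofFace_apply_of_notMem s _ hp, Finsupp.notMem_support_iff.1 fun hx => hp (h hx)]

theorem ofFace_injective (s : Face S) : Function.Injective (ofFace s) := fun w w' h =>
  Subtype.ext <| funext fun p =>
    (ofFace_apply s w p).symm.trans <| (congrArg (fun x : MilnorJoin S => x.weights p) h).trans <|
      ofFace_apply s w' p

/-- The face spanned by the support of a point. -/
def carrier (x : MilnorJoin S) : Face S := ⟨x.weights.support, x.isRainbow⟩

instance : TopologicalSpace (MilnorJoin S) :=
  ⨆ s : Face S, TopologicalSpace.coinduced (ofFace s) inferInstance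

theorem continuous_iff_face {Z : Type*} [TopologicalSpace Z] {f : MilnorJoin S → Z} :
    Continuous f ↔ ∀ s, Continuous (f ∘ ofFace s) := by
  rw [continuous_iSup_dom]
  simp only [continuous_coinduced_dom]

theorem isClosed_iff_face {A : Set (MilnorJoin S)} :
    IsClosed A ↔ ∀ s, IsClosed (ofFace s ⁻¹' A) := by
  rw [isClosed_iSup_iff]
  simp only [isClosed_coinduced]

theorem continuous_ofFace (s : Face S) : Continuous (ofFace s) :=
  continuous_iff_face.1 continuous_id s

theorem continuous_weights (p : S × ℕ) : Continuous fun x : MilnorJoin S => x.weights p := by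
  refine continuous_iff_face.2 fun s => ?_
  by_cases hp : p ∈ s.1
  · exact ((continuous_apply (⟨p, hp⟩ : s.1)).comp continuous_subtype_val).congr
      fun w => (ofFace_apply s w ⟨p, hp⟩).symm
  · exact continuous_const.congr fun w => (ofFace_apply_of_notMem s w hp).symm

instance : T2Space (MilnorJoin S) where
  t2 x y hxy := by
    obtain ⟨p, hp⟩ : ∃ p, x.weights p ≠ y.weights p := by
      by_contra! h
      exact hxy (ext h)
    exact separated_by_continuous (continuous_weights p) hp

/-- The domain is covered by the finitely many closed sets on which the support is contained in a
given face. -/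
theorem continuous_of_support_subset {A : Type*} [TopologicalSpace A] {f : A → MilnorJoin S}
    (t : Finset (S × ℕ)) (ht : ∀ a, (f a).weights.support ⊆ t)
    (hf : ∀ p, Continuous fun a => (f a).weights p) : Continuous f := by
  let C (s : {s : t.powerset // IsRainbow (s.1 : Set (S × ℕ))}) : Set A :=
    {a | (f a).weights.support ⊆ s.1.1}
  have isClosed_C (s) : IsClosed (C s) := by
    have : C s = ⋂ p ∉ s.1.1, {a | (f a).weights p = 0} := by
      ext a
      simp only [C, Set.mem_ofPred_eq, Set.mem_iInter, Finset.subset_iff, Finsupp.mem_support_iff]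
      exact forall_congr' fun p => not_imp_comm
    rw [this]
    exact isClosed_biInter fun p _ => isClosed_eq (hf p) continuous_const
  have continuousOn_C (s) : ContinuousOn f (C s) := by
    rw [continuousOn_iff_continuous_domRestrict]
    have : (C s).domRestrict f = fun a : C s => ofFace ⟨s.1.1, s.2⟩ ((f a).toFace s.1.1 a.2) :=
      funext fun a => (ofFace_toFace _ ⟨s.1.1, s.2⟩ a.2).symm
    rw [this]
    refine (continuous_ofFace _).comp (Continuous.subtype_mk (continuous_pi fun p => ?_) _)
    exact (hf p).comp continuous_subtype_val
  refine (locallyFinite_of_finite C).continuous ?_ isClosed_C continuousOn_C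
  exact Set.eq_univ_of_forall fun a => Set.mem_iUnion.2
    ⟨⟨⟨_, Finset.mem_powerset.2 (ht a)⟩, (f a).isRainbow⟩, Finset.Subset.refl _⟩

/-- The vertices of the join. -/
def vertex (p : S × ℕ) : MilnorJoin S where
  toStdSimplex := .single p
  isRainbow := by
    refine Set.Subsingleton.injOn ?_ _
    simp

/-- The map of infinite joins induced by a map of sets. -/
def map (φ : S → T) (x : MilnorJoin S) : MilnorJoin T where
  toStdSimplex := x.toStdSimplex.map (Prod.map φ id)
  isRainbow := by
    classical
    intro p hp q hq hpq
    obtain ⟨p', hp', rfl⟩ := Finset.mem_image.1 (Finsupp.mapDomain_support hp)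
    obtain ⟨q', hq', rfl⟩ := Finset.mem_image.1 (Finsupp.mapDomain_support hq)
    rw [x.isRainbow hp' hq' hpq]

theorem map_map {R : Type*} (ψ : T → R) (φ : S → T) (x : MilnorJoin S) :
    (x.map φ).map ψ = x.map (ψ ∘ φ) := by
  ext p
  simp only [map, Convexity.StdSimplex.map_map]
  rfl

theorem map_id (x : MilnorJoin S) : x.map id = x := by
  ext p
  simp only [map, Prod.map_id, Convexity.StdSimplex.map_id]

open scoped Classical in
theorem weights_map_apply (φ : S → T) {x : MilnorJoin S} {s : Finset (S × ℕ)}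
    (hs : x.weights.support ⊆ s) (q : T × ℕ) :
    (x.map φ).weights q = ∑ p ∈ s, if Prod.map φ id p = q then x.weights p else 0 := by
  rw [map, Convexity.StdSimplex.weights_map, Finsupp.mapDomain,
    Finsupp.sum_of_support_subset _ hs _ (by simp), Finsupp.finsetSum_apply]
  simp only [Finsupp.single_apply]

theorem injOn_map_support (φ : S → T) (x : MilnorJoin S) :
    Set.InjOn (Prod.map φ id) (x.weights.support : Set (S × ℕ)) := fun _ hp _ hq h =>
  x.isRainbow hp hq (congrArg Prod.snd h :)

theorem weights_map (φ : S → T) {x : MilnorJoin S} {p : S × ℕ} (hp : p ∈ x.weights.support) :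
    (x.map φ).weights (φ p.1, p.2) = x.weights p :=
  Finsupp.mapDomain_apply' _ _ subset_rfl (x.injOn_map_support φ) hp

theorem mem_support_map {φ : S → T} {x : MilnorJoin S} {q : T × ℕ} :
    q ∈ (x.map φ).weights.support ↔ ∃ p ∈ x.weights.support, Prod.map φ id p = q := by
  classical
  rw [map, Convexity.StdSimplex.weights_map,
    Finsupp.mapDomain_support_of_injOn _ (x.injOn_map_support φ), Finset.mem_image]

theorem continuous_map (φ : S → T) : Continuous (map φ) := by
  classical
  refine continuous_iff_face.2 fun s =>
    continuous_of_support_subset (s.1.image (Prod.map φ id)) (fun w q hq => ?_) fun q => ?_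
  · obtain ⟨p, hp, rfl⟩ := mem_support_map.1 hq
    exact Finset.mem_image_of_mem _ (support_ofFace_subset s w hp)
  · simp only [Function.comp_apply, weights_map_apply φ (support_ofFace_subset s _)]
    refine continuous_finsetSum _ fun p _ => ?_
    split_ifs
    · exact (continuous_weights p).comp (continuous_ofFace s)
    · exact continuous_const

section Action

variable {M : Type*} [Monoid M] [MulAction M S]

instance : MulAction M (MilnorJoin S) where
  smul g x := x.map (g • ·)
  one_smul x := by
    change x.map (fun a => (1 : M) • a) = x
    simp only [one_smul]
    exact x.map_id
  mul_smul g h x := by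
    change x.map (fun a => (g * h) • a) = (x.map (h • ·)).map (g • ·)
    simp only [map_map, Function.comp_def, mul_smul]

theorem smul_def (g : M) (x : MilnorJoin S) : g • x = x.map (g • ·) := rfl

instance : ContinuousConstSMul M (MilnorJoin S) where
  continuous_const_smul _ := continuous_map _

end Action

section GroupAction

variable {G : Type*} [Group G] [MulAction G S]

theorem weights_smul (g : G) (x : MilnorJoin S) (p : S × ℕ) :
    (g • x).weights p = x.weights (g⁻¹ • p.1, p.2) := by
  have h := Finsupp.mapDomain_apply ((MulAction.injective g).prodMap Function.injective_id)
    x.weights (g⁻¹ • p.1, p.2)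
  rwa [Prod.map_apply, smul_inv_smul, id] at h

theorem map_smul [MulAction G T] {φ : S → T} (hφ : ∀ (g : G) a, φ (g • a) = g • φ a) (g : G)
    (x : MilnorJoin S) : (g • x).map φ = g • x.map φ := by
  simp only [smul_def, map_map, Function.comp_def, hφ]

end GroupAction

end MilnorJoin

namespace MilnorJoin

variable {S : Type*}

theorem continuous_sum_mul_weights (a : S × ℕ → ℝ) :
    Continuous fun x : MilnorJoin S => x.weights.sum fun p r => a p * r := by
  refine continuous_iff_face.2 fun s => ?_
  have (w : stdSimplex ℝ s.1) : ((ofFace s w).weights.sum fun p r => a p * r) =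
      ∑ p ∈ s.1, a p * (ofFace s w).weights p :=
    Finsupp.sum_of_support_subset _ (support_ofFace_subset s w) _ fun p _ => mul_zero (a p)
  simp only [Function.comp_def, this]
  exact continuous_finsetSum _ fun p _ =>
    continuous_const.mul ((continuous_weights p).comp (continuous_ofFace s))

/-- If infinitely many vertices `p k` occurred in points `x k` of a compact set, then giving `p k`
the weight `k / x k (p k)` would define a continuous function unbounded on that set. -/
theorem exists_finset_support_subset_of_isCompact {K : Set (MilnorJoin S)} (hK : IsCompact K) :
    ∃ t : Finset (S × ℕ), ∀ x ∈ K, x.weights.support ⊆ t := by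
  suffices h : {p | ∃ x ∈ K, p ∈ x.weights.support}.Finite from
    ⟨h.toFinset, fun x hx p hp => h.mem_toFinset.2 ⟨x, hx, hp⟩⟩
  by_contra hinf
  let p := Set.Infinite.natEmbedding _ hinf
  choose x hxK hpx using fun k => (p k).2
  have p_injective : Function.Injective fun k => (p k : S × ℕ) :=
    Subtype.val_injective.comp p.injective
  let a : S × ℕ → ℝ := Function.extend (fun k => (p k : S × ℕ))
    (fun k => k / (x k).weights (p k)) 0
  have a_apply (k) : a (p k) = k / (x k).weights (p k) := p_injective.extend_apply _ _ k
  have a_nonneg (q) : 0 ≤ a q := by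
    by_cases hq : ∃ k, (p k : S × ℕ) = q
    · obtain ⟨k, rfl⟩ := hq
      rw [a_apply]
      exact div_nonneg k.cast_nonneg (weights_nonneg _ _)
    · exact (Function.extend_apply' _ (0 : S × ℕ → ℝ) q hq).ge
  have a_mul (k) : a (p k) * (x k).weights (p k) = k := by
    rw [a_apply, div_mul_cancel₀ _ (Finsupp.mem_support_iff.1 (hpx k))]
  obtain ⟨B, hB⟩ := hK.bddAbove_image (continuous_sum_mul_weights a).continuousOn
  obtain ⟨k, hk⟩ := exists_nat_gt B
  refine hk.not_ge ?_
  calc (k : ℝ) = a (p k) * (x k).weights (p k) := (a_mul k).symm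
    _ ≤ (x k).weights.sum fun q r => a q * r :=
      Finset.single_le_sum (f := fun q => a q * (x k).weights q)
        (fun q _ => mul_nonneg (a_nonneg q) (weights_nonneg _ q)) (hpx k)
    _ ≤ B := hB ⟨x k, hxK k, rfl⟩

/-- The point `(1 - t) x + t v` of the cone with apex a vertex `v` of a colour not occurring
in `x`. -/
def lineTo (v : S × ℕ) (x : MilnorJoin S) (hv : ∀ p ∈ x.weights.support, p.2 ≠ v.2)
    (t : unitInterval) : MilnorJoin S where
  weights := (1 - t : ℝ) • x.weights + Finsupp.single v (t : ℝ)
  nonneg := add_nonneg (smul_nonneg (sub_nonneg.2 t.2.2) x.nonneg) (Finsupp.single_nonneg.2 t.2.1)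
  total := by
    classical
    rw [Finsupp.sum_add_index' (fun _ => rfl) (fun _ _ _ => rfl), Finsupp.sum_single_index rfl,
      Finsupp.sum_smul_index fun _ => rfl, ← Finsupp.mul_sum, x.total]
    ring
  isRainbow := by
    classical
    have h : ∀ p ∈ ((1 - t : ℝ) • x.weights + Finsupp.single v (t : ℝ)).support,
        p ∈ x.weights.support ∨ p = v := fun p hp =>
      (Finset.mem_union.1 (Finsupp.support_add hp)).imp (fun h => Finsupp.support_smul h)
        fun h => Finset.mem_singleton.1 (Finsupp.support_single_subset h)
    intro p hp q hq hpq
    rcases h p hp with hpx | rfl <;> rcases h q hq with hqx | rfl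
    · exact x.isRainbow hpx hqx hpq
    · exact absurd hpq (hv p hpx)
    · exact absurd hpq.symm (hv q hqx)
    · rfl

theorem weights_lineTo (v : S × ℕ) (x : MilnorJoin S) (hv) (t : unitInterval) (p : S × ℕ) :
    (x.lineTo v hv t).weights p = (1 - t) * x.weights p + Finsupp.single v (t : ℝ) p := rfl

theorem support_lineTo_subset [DecidableEq (S × ℕ)] (v : S × ℕ) (x : MilnorJoin S) (hv)
    (t : unitInterval) : (x.lineTo v hv t).weights.support ⊆ insert v x.weights.support :=
  fun p hp => Finset.mem_insert.2 <| or_iff_not_imp_left.2 fun hpv => by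
    rw [Finsupp.mem_support_iff, weights_lineTo, Finsupp.single_eq_of_ne hpv, add_zero] at hp
    exact Finsupp.mem_support_iff.2 (right_ne_zero_of_mul hp)

theorem lineTo_zero (v : S × ℕ) (x : MilnorJoin S) (hv) : x.lineTo v hv 0 = x := by
  ext p
  simp [weights_lineTo]

theorem lineTo_one (v : S × ℕ) (x : MilnorJoin S) (hv) : x.lineTo v hv 1 = vertex v := by
  ext p
  simp [weights_lineTo, vertex]

theorem nullhomotopic [Nonempty S] {K : Type*} [TopologicalSpace K] [CompactSpace K]
    (f : C(K, MilnorJoin S)) : f.Nullhomotopic := by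
  classical
  obtain ⟨t, ht⟩ := exists_finset_support_subset_of_isCompact (isCompact_range f.continuous)
  obtain ⟨n, hn⟩ := Infinite.exists_notMem_finset (t.image Prod.snd)
  obtain ⟨a⟩ := ‹Nonempty S›
  have hft (z : K) : (f z).weights.support ⊆ t := ht _ ⟨z, rfl⟩
  have hv (z : K) : ∀ p ∈ (f z).weights.support, p.2 ≠ (a, n).2 := fun p hp h =>
    hn (Finset.mem_image.2 ⟨p, hft z hp, h⟩)
  refine ⟨vertex (a, n), ⟨⟨⟨fun z => (f z.2).lineTo (a, n) (hv z.2) z.1, ?_⟩,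
    fun z => lineTo_zero _ _ (hv z), fun z => lineTo_one _ _ (hv z)⟩⟩⟩
  refine continuous_of_support_subset (insert (a, n) t) (fun z => ?_) fun p => ?_
  · exact (support_lineTo_subset _ _ _ _).trans (Finset.insert_subset_insert _ (hft z.2))
  · have hfp : Continuous fun z : unitInterval × K => (f z.2).weights p :=
      ((continuous_weights p).comp f.continuous).comp continuous_snd
    refine (Continuous.mul (by fun_prop) hfp).add ?_
    simp only [Finsupp.single_apply]
    split_ifs <;> fun_prop

section Quotient

variable {G : Type*} [Group G]

theorem weights_smul_mul (g : G) (x : MilnorJoin G) (a : G) (n : ℕ) :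
    (g • x).weights (g * a, n) = x.weights (a, n) := by
  rw [weights_smul, smul_eq_mul, inv_mul_cancel_left]

theorem eq_one_of_weights_smul_ne_zero {g : G} {x : MilnorJoin G} {p : G × ℕ}
    (h : x.weights p ≠ 0) (hg : (g • x).weights p ≠ 0) : g = 1 := by
  rw [weights_smul] at hg
  have := congrArg Prod.fst
    (x.isRainbow (Finsupp.mem_support_iff.2 hg) (Finsupp.mem_support_iff.2 h) rfl)
  simpa using this

variable (G) in
/-- Milnor's model of the classifying space of a discrete group. -/
abbrev Base : Type _ := MulAction.orbitRel.Quotient G (MilnorJoin G)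

/-- The universal covering `EG → BG` of Milnor's model of the classifying space. -/
def toBase (x : MilnorJoin G) : Base G := Quotient.mk _ x

theorem toBase_eq_iff {x y : MilnorJoin G} : toBase x = toBase y ↔ ∃ g : G, g • y = x :=
  Quotient.eq (r := MulAction.orbitRel G (MilnorJoin G))

theorem isOpen_setOf_weights_pos (p : S × ℕ) : IsOpen {x : MilnorJoin S | 0 < x.weights p} :=
  isOpen_lt continuous_const (continuous_weights p)

theorem exists_weights_pos (x : MilnorJoin S) : ∃ p, 0 < x.weights p :=
  x.support_weights_nonempty.imp fun _ => weights_pos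

theorem isQuotientCoveringMap_toBase : IsQuotientCoveringMap (toBase (G := G)) G where
  toIsQuotientMap := isQuotientMap_quot_mk
  toContinuousConstSMul := inferInstance
  apply_eq_iff_mem_orbit := toBase_eq_iff
  disjoint x := by
    obtain ⟨p, hp⟩ := x.exists_weights_pos
    refine ⟨_, (isOpen_setOf_weights_pos p).mem_nhds hp, ?_⟩
    rintro g ⟨_, ⟨y, hy, rfl⟩, hgy⟩
    exact eq_one_of_weights_smul_ne_zero (ne_of_gt hy) (ne_of_gt hgy)

theorem toBase_smul (g : G) (x : MilnorJoin G) : toBase (g • x) = toBase x :=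
  isQuotientCoveringMap_toBase.map_smul g

/-- The total weight of each colour, as a point of the simplex on the set `ℕ` of colours. -/
def colorWeights : Base G → MilnorJoin Unit :=
  Quotient.lift (map fun _ => ()) <| by
    rintro _ x ⟨g, rfl⟩
    exact map_map _ _ x

theorem continuous_colorWeights : Continuous (colorWeights (G := G)) :=
  (continuous_map _).quotient_lift _

theorem exists_weights_smul_pos {x y : MilnorJoin G}
    (h : colorWeights (toBase x) = colorWeights (toBase y)) :
    ∃ (p : G × ℕ) (g : G), 0 < x.weights p ∧ 0 < (g • y).weights p := by
  obtain ⟨⟨a, n⟩, hx⟩ := x.support_weights_nonempty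
  have hxy : (x.map fun _ => ()).weights.support = (y.map fun _ => ()).weights.support :=
    congrArg (fun z : MilnorJoin Unit => z.weights.support) h
  obtain ⟨⟨b, m⟩, hy, hmn⟩ := mem_support_map.1 (hxy ▸ mem_support_map.2 ⟨_, hx, rfl⟩)
  obtain rfl : m = n := congrArg Prod.snd hmn
  refine ⟨(a, m), a * b⁻¹, weights_pos hx, ?_⟩
  have := weights_smul_mul (a * b⁻¹) y b m
  rw [inv_mul_cancel_right] at this
  exact this ▸ weights_pos hy

instance : T2Space (Base G) where
  t2 X Y hXY := by
    obtain ⟨x, rfl⟩ := isQuotientCoveringMap_toBase.surjective X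
    obtain ⟨y, rfl⟩ := isQuotientCoveringMap_toBase.surjective Y
    by_cases hcol : colorWeights (toBase x) = colorWeights (toBase y)
    swap
    · exact separated_by_continuous continuous_colorWeights hcol
    obtain ⟨p, g, hx, hy⟩ := exists_weights_smul_pos hcol
    rw [← toBase_smul g y] at hXY ⊢
    obtain ⟨U, V, hU, hV, hxU, hyV, hUV⟩ := t2_separation fun h => hXY (congrArg toBase h)
    have hW := isOpen_setOf_weights_pos p
    have toBase_open := (isQuotientCoveringMap_toBase (G := G)).isOpenQuotientMap.isOpenMap
    refine ⟨_, _, toBase_open _ (hU.inter hW), toBase_open _ (hV.inter hW),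
      ⟨x, ⟨hxU, hx⟩, rfl⟩, ⟨_, ⟨hyV, hy⟩, rfl⟩, Set.disjoint_left.2 ?_⟩
    rintro _ ⟨u, ⟨huU, huW⟩, rfl⟩ ⟨v, ⟨hvV, hvW⟩, hvu⟩
    obtain ⟨g, rfl⟩ := toBase_eq_iff.1 hvu
    obtain rfl := eq_one_of_weights_smul_ne_zero (ne_of_gt huW) (ne_of_gt hvW)
    exact Set.disjoint_left.1 hUV huU (one_smul G u ▸ hvV)

end Quotient

end MilnorJoin

/-! ### The CW-structure of the base of Milnor's join -/

section Simplex

variable {ι E : Type*} [Fintype ι] [NormedAddCommGroup E] [NormedSpace ℝ E]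

theorem coord_sum_smul (b : AffineBasis ι ℝ E) (w : stdSimplex ℝ ι) (i : ι) :
    b.coord i (∑ j, w j • b j) = w i := by
  rw [← Finset.univ.affineCombination_eq_linear_combination b w w.2.2]
  exact b.coord_apply_combination_of_mem (Finset.mem_univ i) w.2.2

/-- Barycentric coordinates, as a homeomorphism from the simplex spanned by an affine basis onto
the standard simplex. -/
def homeomorphStdSimplex [FiniteDimensional ℝ E] (b : AffineBasis ι ℝ E) :
    convexHull ℝ (Set.range b) ≃ₜ stdSimplex ℝ ι where
  toFun z := ⟨fun i => b.coord i z, b.convexHull_eq_nonneg_coord.le z.2, b.sum_coord_apply_eq_one _⟩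
  invFun w := ⟨∑ i, w i • b i, b.convexHull_eq_nonneg_coord.ge fun i =>
    (coord_sum_smul b w i).symm ▸ w.2.1 i⟩
  left_inv z := Subtype.ext (b.linear_combination_coord_eq_self _)
  right_inv w := Subtype.ext (funext (coord_sum_smul b w))
  continuous_toFun := by
    refine Continuous.subtype_mk (continuous_pi fun i => ?_) _
    exact (continuous_barycentric_coord b i).comp continuous_subtype_val
  continuous_invFun := by
    refine Continuous.subtype_mk (continuous_finsetSum _ fun i _ => ?_) _
    exact ((continuous_apply i).comp continuous_subtype_val).smul continuous_const

theorem exists_homeomorph_unitDisk_stdSimplex {n : ℕ} (h : Fintype.card ι = n + 1) :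
    ∃ e : UnitDisk n ≃ₜ stdSimplex ℝ ι,
      ∀ z : UnitDisk n, ‖(z : EuclideanSpace ℝ (Fin n))‖ < 1 ↔ ∀ i, 0 < e z i := by
  obtain ⟨b⟩ := AffineBasis.exists_affineBasis_of_finiteDimensional (k := ℝ)
    (P := EuclideanSpace ℝ (Fin n)) (ι := ι) (by rw [h, finrank_euclideanSpace_fin])
  have isClosed_hull : IsClosed (convexHull ℝ (Set.range b)) :=
    (Set.finite_range b).isClosed_convexHull ℝ
  obtain ⟨k, k_interior, k_closure, -⟩ :=
    exists_homeomorph_image_interior_closure_frontier_eq_unitBall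
      (convex_convexHull ℝ (Set.range b)) ⟨_, b.centroid_mem_interior_convexHull⟩
      (isBounded_convexHull.2 (Set.finite_range b).isBounded)
  rw [isClosed_hull.closure_eq] at k_closure
  let e : convexHull ℝ (Set.range b) ≃ₜ UnitDisk n :=
    (k.image _).trans (Homeomorph.setCongr k_closure)
  refine ⟨e.symm.trans (homeomorphStdSimplex b), fun z => ?_⟩
  obtain ⟨y, rfl⟩ := e.surjective z
  calc ‖k y‖ < 1 ↔ k y ∈ k '' interior (convexHull ℝ (Set.range b)) := by
        rw [k_interior, mem_ball_zero_iff]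
    _ ↔ ∀ i, 0 < b.coord i y := by
        rw [k.injective.mem_set_image, b.interior_convexHull, Set.mem_ofPred_eq]
    _ ↔ _ := by
        rw [Homeomorph.trans_apply, e.symm_apply_apply]
        rfl

/-- A homeomorphism from the disk onto the standard simplex of the same dimension that respects
interiors. -/
def unitDiskHomeomorph {n : ℕ} (h : Fintype.card ι = n + 1) : UnitDisk n ≃ₜ stdSimplex ℝ ι :=
  (exists_homeomorph_unitDisk_stdSimplex h).choose

theorem norm_lt_one_iff_unitDiskHomeomorph {n : ℕ} (h : Fintype.card ι = n + 1) (z : UnitDisk n) :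
    ‖(z : EuclideanSpace ℝ (Fin n))‖ < 1 ↔ ∀ i, 0 < unitDiskHomeomorph h z i :=
  (exists_homeomorph_unitDisk_stdSimplex h).choose_spec z

end Simplex

namespace MilnorJoin

theorem continuous_toFace {S A : Type*} [TopologicalSpace A] {f : A → MilnorJoin S}
    {t : Finset (S × ℕ)} (ht : ∀ a, (f a).weights.support ⊆ t) (hf : Continuous f) :
    Continuous fun a => (f a).toFace t (ht a) :=
  continuous_induced_rng.2 (continuous_pi fun p => (continuous_weights (p : S × ℕ)).comp hf)

section Cells

variable {G : Type*} [Group G]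

/-- A face of `EG` is normalized if its vertex of least colour is labelled `1`; every face has a
unique normalized translate. -/
def IsNormalized (s : Finset (G × ℕ)) : Prop := ∃ n, (1, n) ∈ s ∧ ∀ q ∈ s, n ≤ q.2

theorem mem_support_smul {g : G} {x : MilnorJoin G} {q : G × ℕ} :
    q ∈ (g • x).weights.support ↔ (g⁻¹ * q.1, q.2) ∈ x.weights.support := by
  rw [Finsupp.mem_support_iff, Finsupp.mem_support_iff, weights_smul, smul_eq_mul]

theorem card_support_smul (g : G) (x : MilnorJoin G) :
    (g • x).weights.support.card = x.weights.support.card := by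
  classical
  rw [smul_def, map, Convexity.StdSimplex.weights_map,
    Finsupp.mapDomain_support_of_injOn _ (x.injOn_map_support _),
    Finset.card_image_of_injOn (x.injOn_map_support _)]

theorem exists_isNormalized_smul (x : MilnorJoin G) :
    ∃ g : G, IsNormalized (g • x).weights.support := by
  obtain ⟨p, hp, hmin⟩ := x.weights.support.exists_min_image Prod.snd x.support_weights_nonempty
  refine ⟨p.1⁻¹, p.2, mem_support_smul.2 ?_, fun q hq => (hmin _ (mem_support_smul.1 hq) :)⟩
  rwa [inv_inv, mul_one]

theorem eq_one_of_isNormalized {g : G} {x : MilnorJoin G} (hx : IsNormalized x.weights.support)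
    (hgx : IsNormalized (g • x).weights.support) : g = 1 := by
  obtain ⟨n, hn, hn_min⟩ := hx
  obtain ⟨m, hm, hm_min⟩ := hgx
  obtain rfl : m = n := le_antisymm
    (hm_min (g, n) (mem_support_smul.2 (by rwa [inv_mul_cancel])))
    (hn_min _ (mem_support_smul.1 hm))
  exact eq_one_of_weights_smul_ne_zero (Finsupp.mem_support_iff.1 hn) (Finsupp.mem_support_iff.1 hm)

variable (G) in
/-- The `n`-cells of `BG`, represented by the normalized `n`-simplices of `EG`. -/
def Cell (n : ℕ) : Type _ := {s : Face G // s.1.card = n + 1 ∧ IsNormalized s.1}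

/-- The coordinates of a closed cell of `EG`. -/
def cellHomeomorph {n : ℕ} (s : Cell G n) : UnitDisk n ≃ₜ stdSimplex ℝ s.1.1 :=
  unitDiskHomeomorph ((Fintype.card_coe _).trans s.2.1)

/-- The lift to `EG` of the characteristic map of a cell of `BG`. -/
def cellMap {n : ℕ} (s : Cell G n) (z : UnitDisk n) : MilnorJoin G :=
  ofFace s.1 (cellHomeomorph s z)

theorem continuous_cellMap {n : ℕ} (s : Cell G n) : Continuous (cellMap s) :=
  (continuous_ofFace s.1).comp (cellHomeomorph s).continuous

theorem support_cellMap_eq_iff {n : ℕ} (s : Cell G n) (z : UnitDisk n) :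
    (cellMap s z).weights.support = s.1.1 ↔ ‖(z : EuclideanSpace ℝ (Fin n))‖ < 1 := by
  calc _ ↔ ∀ p : s.1.1, 0 < (cellMap s z).weights p := by
        refine ⟨fun h p => weights_pos (h.ge p.2), fun h => ?_⟩
        refine (support_ofFace_subset _ _).antisymm fun p hp => ?_
        exact Finsupp.mem_support_iff.2 (h ⟨p, hp⟩).ne'
    _ ↔ ∀ p, 0 < cellHomeomorph s z p := forall_congr' fun p => by rw [cellMap, ofFace_apply]
    _ ↔ _ := (norm_lt_one_iff_unitDiskHomeomorph _ z).symm

theorem exists_cell_carrier_smul (x : MilnorJoin G) {n : ℕ} (hn : x.weights.support.card = n + 1) :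
    ∃ (g : G) (s : Cell G n), s.1 = (g • x).carrier := by
  obtain ⟨g, hg⟩ := x.exists_isNormalized_smul
  exact ⟨g, ⟨(g • x).carrier, (card_support_smul g x).trans hn, hg⟩, rfl⟩

theorem exists_cellMap_eq {n : ℕ} {s : Cell G n} {x : MilnorJoin G}
    (h : x.weights.support ⊆ s.1.1) : ∃ z, cellMap s z = x := by
  refine ⟨(cellHomeomorph s).symm (x.toFace _ h), ?_⟩
  rw [cellMap, Homeomorph.apply_symm_apply, ofFace_toFace]

theorem exists_toBase_cellMap_eq (x : MilnorJoin G) :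
    ∃ (n : ℕ) (s : Cell G n) (z : UnitDisk n), n + 1 = x.weights.support.card ∧
      ‖(z : EuclideanSpace ℝ (Fin n))‖ < 1 ∧ toBase (cellMap s z) = toBase x := by
  obtain ⟨n, hn⟩ := Nat.exists_eq_succ_of_ne_zero (Finset.card_pos.2 x.support_weights_nonempty).ne'
  obtain ⟨g, s, hs⟩ := x.exists_cell_carrier_smul hn
  have support_eq : (g • x).weights.support = s.1.1 := congrArg Subtype.val hs.symm
  obtain ⟨z, hz⟩ := exists_cellMap_eq support_eq.subset
  exact ⟨n, s, z, hn.symm, (support_cellMap_eq_iff s z).1 (hz ▸ support_eq), hz ▸ toBase_smul g x⟩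

theorem cell_eq_of_toBase_eq {n m : ℕ} {s : Cell G n} {t : Cell G m} {z : UnitDisk n}
    {w : UnitDisk m} (hz : ‖(z : EuclideanSpace ℝ (Fin n))‖ < 1)
    (hw : ‖(w : EuclideanSpace ℝ (Fin m))‖ < 1)
    (h : toBase (cellMap s z) = toBase (cellMap t w)) :
    (⟨n, s, z⟩ : Σ (n : ℕ) (_ : Cell G n), UnitDisk n) = ⟨m, t, w⟩ := by
  obtain ⟨g, hg⟩ := toBase_eq_iff.1 h
  rw [← support_cellMap_eq_iff s] at hz
  rw [← support_cellMap_eq_iff t] at hw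
  obtain rfl := eq_one_of_isNormalized (hw ▸ t.2.2) (hg ▸ hz ▸ s.2.2)
  rw [one_smul] at hg
  have hst : s.1 = t.1 := Subtype.ext (hz.symm.trans (hg ▸ hw))
  obtain rfl : n = m := Nat.succ_injective (s.2.1.symm.trans (hst ▸ t.2.1))
  obtain rfl : s = t := Subtype.ext hst
  rw [(cellHomeomorph s).injective (ofFace_injective _ hg)]

/-- The simplex `s` is isomorphic to a normalized one by a translation, along which the closedness
of a `G`-invariant set can be transported. -/
theorem isClosed_of_isClosed_preimage_cellMap {A : Set (Base G)}
    (h : ∀ n (s : Cell G n), IsClosed ((fun z => toBase (cellMap s z)) ⁻¹' A)) : IsClosed A := by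
  rw [← (isQuotientCoveringMap_toBase (G := G)).isClosed_preimage, isClosed_iff_face]
  intro s
  cases isEmpty_or_nonempty s.1
  · have : IsEmpty (stdSimplex ℝ s.1) := ⟨fun w => by simpa using w.2.2⟩
    rw [Set.eq_empty_of_isEmpty (_ ⁻¹' _)]
    exact isClosed_empty
  let x₀ := ofFace s stdSimplex.barycenter
  have hx₀ : s.1 ⊆ x₀.weights.support := fun p hp => by
    rw [Finsupp.mem_support_iff, ofFace_apply s _ ⟨p, hp⟩]
    exact (stdSimplex.barycenter_apply (𝕜 := ℝ) _).trans_ne (by positivity)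
  obtain ⟨n, hn⟩ := Nat.exists_eq_succ_of_ne_zero
    (Finset.card_pos.2 x₀.support_weights_nonempty).ne'
  obtain ⟨g, t, ht⟩ := x₀.exists_cell_carrier_smul hn
  have support_subset (w) : (g • ofFace s w).weights.support ⊆ t.1.1 := fun q hq => by
    rw [ht]
    exact mem_support_smul.2 (hx₀ (support_ofFace_subset s w (mem_support_smul.1 hq)))
  have hF : Continuous fun w => (g • ofFace s w).toFace t.1.1 (support_subset w) :=
    continuous_toFace support_subset ((continuous_const_smul g).comp (continuous_ofFace s))
  convert ((h n t).preimage ((cellHomeomorph t).symm.continuous.comp hF)) using 1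
  ext w
  simp only [Set.mem_preimage, Function.comp_apply, cellMap, Homeomorph.apply_symm_apply,
    ofFace_toFace, toBase_smul]

end Cells

/-- The cell structure of Milnor's model, with one cell for each orbit of simplices of `EG`. -/
def cwStructure (G : Type) [Group G] : CWStructure (Base G) where
  t2 := inferInstance
  cells := Cell G
  charMap _ s z := toBase (cellMap s z)
  charMap_continuous _ s := isQuotientCoveringMap_toBase.continuous.comp (continuous_cellMap s)
  sphere_le n s z hz := by
    obtain ⟨m, t, w, hm, hw, he⟩ := exists_toBase_cellMap_eq (cellMap s z)
    refine ⟨m, ?_, t, w, hw, he⟩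
    have support_ssubset : (cellMap s z).weights.support ⊂ s.1.1 :=
      (support_ofFace_subset _ _).ssubset_of_ne fun h =>
        ((support_cellMap_eq_iff s z).1 h).ne hz
    have := Finset.card_lt_card support_ssubset
    have := s.2.1
    lia
  partition X := by
    obtain ⟨x, rfl⟩ := isQuotientCoveringMap_toBase.surjective X
    obtain ⟨n, s, z, -, hz, hx⟩ := exists_toBase_cellMap_eq x
    exact ⟨⟨n, s, z⟩, ⟨hz, hx⟩, fun p hp => cell_eq_of_toBase_eq hp.1 hz (hp.2.trans hx.symm)⟩
  weak_topology _ :=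
    ⟨fun hA _ s => hA.preimage
      (isQuotientCoveringMap_toBase.continuous.comp (continuous_cellMap s)),
      isClosed_of_isClosed_preimage_cellMap⟩

end MilnorJoin

/-! ### Null-homotopies and homotopy groups -/

section Sphere

open Metric

variable {V : Type*} [NormedAddCommGroup V] [NormedSpace ℝ V]

theorem norm_smul_sphere (t : unitInterval) (u : sphere (0 : V) 1) : ‖(t : ℝ) • (u : V)‖ = t := by
  rw [norm_smul, mem_sphere_zero_iff_norm.1 u.2, mul_one, Real.norm_of_nonneg t.2.1]

/-- Polar coordinates on the unit ball, which exhibit it as the cone on the unit sphere. -/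
def polarCoordinates (V : Type*) [NormedAddCommGroup V] [NormedSpace ℝ V] :
    C(unitInterval × sphere (0 : V) 1, closedBall (0 : V) 1) where
  toFun p := ⟨(p.1 : ℝ) • (p.2 : V), mem_closedBall_zero_iff.2 <|
    (norm_smul_sphere p.1 p.2).trans_le p.1.2.2⟩
  continuous_toFun := by fun_prop

theorem polarCoordinates_eq_iff {t t' : unitInterval} {u u' : sphere (0 : V) 1} :
    polarCoordinates V (t, u) = polarCoordinates V (t', u') ↔ t = t' ∧ (t = 0 ∨ u = u') := by
  constructor
  · intro h
    have h_smul : (t : ℝ) • (u : V) = (t' : ℝ) • (u' : V) := congrArg Subtype.val h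
    obtain rfl : t = t' := Subtype.ext <|
      (norm_smul_sphere t u).symm.trans ((congrArg norm h_smul).trans (norm_smul_sphere t' u'))
    refine ⟨rfl, or_iff_not_imp_left.2 fun ht => ?_⟩
    exact Subtype.ext (smul_right_injective V (fun h0 => ht (Subtype.ext h0)) h_smul)
  · rintro ⟨rfl, rfl | rfl⟩
    · exact Subtype.ext ((zero_smul ℝ (u : V)).trans (zero_smul ℝ (u' : V)).symm)
    · rfl

theorem isQuotientMap_polarCoordinates [ProperSpace V] [Nonempty (sphere (0 : V) 1)] :
    Topology.IsQuotientMap (polarCoordinates V) := by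
  refine (polarCoordinates V).continuous.isClosedMap.isQuotientMap
    (polarCoordinates V).continuous ?_
  rintro ⟨x, hx⟩
  rcases eq_or_ne x 0 with rfl | hx0
  · exact ⟨(0, Classical.arbitrary _), Subtype.ext (zero_smul ℝ _)⟩
  · exact ⟨(⟨‖x‖, norm_nonneg x, mem_closedBall_zero_iff.1 hx⟩,
      ⟨‖x‖⁻¹ • x, mem_sphere_zero_iff_norm.2 (norm_smul_inv_norm hx0)⟩),
      Subtype.ext (smul_inv_smul₀ (norm_ne_zero_iff.2 hx0) x)⟩

theorem exists_extension_of_nullhomotopic [ProperSpace V] {Z : Type*} [TopologicalSpace Z]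
    {f : C(sphere (0 : V) 1, Z)} (hf : f.Nullhomotopic) :
    ∃ F : C(closedBall (0 : V) 1, Z),
      ∀ x : sphere (0 : V) 1, F ⟨x, sphere_subset_closedBall x.2⟩ = f x := by
  obtain ⟨z, ⟨H⟩⟩ := hf
  rcases isEmpty_or_nonempty (sphere (0 : V) 1) with _ | _
  · exact ⟨ContinuousMap.const _ z, isEmptyElim⟩
  have factors : Function.FactorsThrough
      (H.toContinuousMap.comp (unitInterval.symmHomeomorph.toHomotopyEquiv.toFun.prodMap (.id _)))
      (polarCoordinates V) := by
    rintro ⟨t, u⟩ ⟨t', u'⟩ h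
    obtain ⟨rfl, rfl | rfl⟩ := polarCoordinates_eq_iff.1 h
    · simp
    · rfl
  refine ⟨isQuotientMap_polarCoordinates.lift _ factors, fun x => ?_⟩
  have polar_one : polarCoordinates V (1, x) = ⟨x, sphere_subset_closedBall x.2⟩ :=
    Subtype.ext (one_smul ℝ (x : V))
  rw [← polar_one]
  refine (DFunLike.congr_fun (isQuotientMap_polarCoordinates.lift_comp _ factors) (1, x)).trans ?_
  simp

end Sphere

section Cube

open Metric

variable {N : Type*}

/-- The affine homeomorphism from the cube `I^N` onto the unit ball of the sup norm. -/
def cubeToBall (x : N → unitInterval) : N → ℝ := fun i => 2 * (x i : ℝ) - 1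

/-- The left inverse of `cubeToBall`, extended to all of `ℝ^N` by clamping each coordinate. -/
def ballToCube (y : N → ℝ) : N → unitInterval :=
  fun i => Set.projIcc 0 1 zero_le_one ((y i + 1) / 2)

@[fun_prop]
theorem continuous_cubeToBall : Continuous (cubeToBall (N := N)) := by
  unfold cubeToBall
  fun_prop

@[fun_prop]
theorem continuous_ballToCube : Continuous (ballToCube (N := N)) :=
  continuous_pi fun _ => continuous_projIcc.comp (by fun_prop)

theorem ballToCube_cubeToBall (x : N → unitInterval) : ballToCube (cubeToBall x) = x := by
  funext i
  rw [ballToCube, cubeToBall, sub_add_cancel, mul_div_cancel_left₀ _ two_ne_zero]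
  exact Set.projIcc_val zero_le_one (x i)

variable [Fintype N]

theorem cubeToBall_ballToCube {y : N → ℝ} (hy : ‖y‖ ≤ 1) : cubeToBall (ballToCube y) = y := by
  funext i
  have abs_le_one : |y i| ≤ 1 := (norm_le_pi_norm y i).trans hy
  have mem : (y i + 1) / 2 ∈ Set.Icc (0 : ℝ) 1 :=
    ⟨by linarith [neg_le_of_abs_le abs_le_one], by linarith [le_of_abs_le abs_le_one]⟩
  rw [cubeToBall, ballToCube, Set.projIcc_of_mem zero_le_one mem]
  ring

theorem norm_cubeToBall_le (x : N → unitInterval) : ‖cubeToBall x‖ ≤ 1 := by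
  refine (pi_norm_le_iff_of_nonneg zero_le_one).2 fun i => abs_le.2 ?_
  unfold cubeToBall
  exact ⟨by linarith [(x i).2.1], by linarith [(x i).2.2]⟩

theorem norm_cubeToBall_eq_one_iff {x : N → unitInterval} :
    ‖cubeToBall x‖ = 1 ↔ x ∈ Cube.boundary N := by
  have abs_lt_one_iff (t : unitInterval) : |2 * (t : ℝ) - 1| < 1 ↔ ¬(t = 0 ∨ t = 1) := by
    rw [abs_lt, not_or, ← ne_eq, ← ne_eq, ← unitInterval.pos_iff_ne_zero,
      ← unitInterval.lt_one_iff_ne_one, ← unitInterval.coe_pos, ← unitInterval.coe_lt_one]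
    constructor <;> rintro ⟨h, h'⟩ <;> constructor <;> linarith
  rw [← not_iff_not, ← ne_eq, ← (norm_cubeToBall_le x).lt_iff_ne, pi_norm_lt_iff zero_lt_one]
  simp [Cube.boundary, cubeToBall, abs_lt_one_iff]

theorem ballToCube_mem_boundary {y : N → ℝ} (hy : ‖y‖ = 1) : ballToCube y ∈ Cube.boundary N := by
  rw [← norm_cubeToBall_eq_one_iff, cubeToBall_ballToCube hy.le, hy]

variable {Z : Type*} [TopologicalSpace Z]

theorem homotopicRel_boundary_of_nullhomotopic
    (hZ : ∀ φ : C(sphere (0 : (N → ℝ) × ℝ) 1, Z), φ.Nullhomotopic)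
    {f g : C(N → unitInterval, Z)} (h : ∀ x ∈ Cube.boundary N, f x = g x) :
    f.HomotopicRel g (Cube.boundary N) := by
  let φ : C(sphere (0 : (N → ℝ) × ℝ) 1, Z) :=
    ⟨fun z => if 0 ≤ z.1.2 then f (ballToCube z.1.1) else g (ballToCube z.1.1), by
      refine Continuous.if_le (by fun_prop) (by fun_prop) (by fun_prop) (by fun_prop) ?_
      intro z hz
      have norm_eq := mem_sphere_zero_iff_norm.1 z.2
      refine h _ (ballToCube_mem_boundary ?_)
      rwa [Prod.norm_def, ← hz, norm_zero, max_eq_left (norm_nonneg _)] at norm_eq⟩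
  obtain ⟨F, hF⟩ := exists_extension_of_nullhomotopic (hZ φ)
  let cyl (t : unitInterval) (x : N → unitInterval) : (N → ℝ) × ℝ :=
    (cubeToBall x, 1 - 2 * (t : ℝ))
  have norm_cyl_snd_le (t : unitInterval) : ‖1 - 2 * (t : ℝ)‖ ≤ 1 :=
    abs_le.2 ⟨by linarith [t.2.2], by linarith [t.2.1]⟩
  have cyl_mem (t : unitInterval) (x : N → unitInterval) : cyl t x ∈ closedBall 0 1 :=
    mem_closedBall_zero_iff.2 (max_le (norm_cubeToBall_le x) (norm_cyl_snd_le t))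
  have F_cyl {t : unitInterval} {x : N → unitInterval}
      (hz : 1 ≤ ‖cubeToBall x‖ ∨ 1 ≤ ‖1 - 2 * (t : ℝ)‖) :
      F ⟨cyl t x, cyl_mem t x⟩ = if 0 ≤ 1 - 2 * (t : ℝ) then f x else g x := by
    have hz_mem : cyl t x ∈ sphere 0 1 := mem_sphere_zero_iff_norm.2 <|
      le_antisymm (mem_closedBall_zero_iff.1 (cyl_mem t x)) (le_max_iff.2 hz)
    rw [hF ⟨cyl t x, hz_mem⟩]
    simp only [φ, cyl, ContinuousMap.coe_mk, ballToCube_cubeToBall]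
  refine ⟨⟨⟨⟨fun p => F ⟨cyl p.1 p.2, cyl_mem p.1 p.2⟩, by fun_prop⟩, fun x => ?_, fun x => ?_⟩,
    fun t x hx => ?_⟩⟩
  · exact (F_cyl (.inr (by simp))).trans (by simp)
  · exact (F_cyl (.inr (by norm_num))).trans (by norm_num)
  · exact (F_cyl (.inl (norm_cubeToBall_eq_one_iff.2 hx).ge)).trans (by rw [h x hx, ite_self])

theorem simplyConnectedSpace_of_nullhomotopic [PathConnectedSpace Z]
    (hZ : ∀ φ : C(sphere (0 : (Fin 1 → ℝ) × ℝ) 1, Z), φ.Nullhomotopic) :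
    SimplyConnectedSpace Z := by
  refine simply_connected_iff_paths_homotopic'.2 ⟨inferInstance, fun {x y} p q => ?_⟩
  obtain ⟨H⟩ := homotopicRel_boundary_of_nullhomotopic hZ
    (f := ⟨fun t => p (t 0), by fun_prop⟩) (g := ⟨fun t => q (t 0), by fun_prop⟩) (by
      rintro t ⟨i, hi⟩
      rw [Fin.fin_one_eq_zero i] at hi
      rcases hi with hi | hi <;> simp [hi])
  refine ⟨⟨⟨⟨fun t => H (t.1, fun _ => t.2), by fun_prop⟩, fun t => H.map_zero_left fun _ => t,
    fun t => H.map_one_left fun _ => t⟩, fun t x hx => H.eq_fst t ⟨0, ?_⟩⟩⟩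
  simpa using hx

end Cube

section HigherHomotopy

open Metric

theorem exists_lift_constOn_boundary_of_isCoveringMap {E B : Type*} [TopologicalSpace E]
    [TopologicalSpace B] {p : E → B} (hp : IsCoveringMap p) (hp_surj : Function.Surjective p)
    {n : ℕ} (hn : 2 ≤ n) {b : B} (f : GenLoop (Fin n) B b) :
    ∃ (f' : C(Fin n → unitInterval, E)) (e : E), (∀ x, p (f' x) = f x) ∧ p e = b ∧
      ∀ x ∈ Cube.boundary (Fin n), f' x = e := by
  obtain ⟨e₀, he₀⟩ := hp_surj (f (ballToCube 0))
  obtain ⟨g, ⟨-, hg⟩, -⟩ := hp.existsUnique_continuousMap_lifts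
    (f.1.comp ⟨ballToCube, continuous_ballToCube⟩) (0 : Fin n → ℝ) e₀ he₀
  have p_g (y : Fin n → ℝ) : p (g y) = f (ballToCube y) := congrFun hg y
  have p_g_eq_b : ∀ y ∈ sphere (0 : Fin n → ℝ) 1, p (g y) = b := fun y hy => by
    rw [p_g]
    exact f.2 _ (ballToCube_mem_boundary (mem_sphere_zero_iff_norm.1 hy))
  have sphere_preconnected : _root_.IsPreconnected (sphere (0 : Fin n → ℝ) 1) :=
    isPreconnected_sphere (by rw [rank_fin_fun]; exact_mod_cast hn) 0 1
  have one_mem : 1 ∈ sphere (0 : Fin n → ℝ) 1 := by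
    have : Nonempty (Fin n) := ⟨⟨0, by omega⟩⟩
    rw [mem_sphere_zero_iff_norm, norm_one]
  refine ⟨g.comp ⟨cubeToBall, continuous_cubeToBall⟩, g 1, fun x => ?_, p_g_eq_b 1 one_mem,
    fun x hx => ?_⟩
  · exact (p_g _).trans (congrArg f (ballToCube_cubeToBall x))
  · exact hp.constOn_of_comp sphere_preconnected g.continuous.continuousOn
      (fun y hy z hz => (p_g_eq_b y hy).trans (p_g_eq_b z hz).symm)
      (mem_sphere_zero_iff_norm.2 (norm_cubeToBall_eq_one_iff.2 hx)) one_mem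

theorem subsingleton_homotopyGroup_of_isCoveringMap {E B : Type*} [TopologicalSpace E]
    [TopologicalSpace B] {p : E → B} (hp : IsCoveringMap p) (hp_surj : Function.Surjective p)
    {n : ℕ} (hn : 2 ≤ n) (hE : ∀ φ : C(sphere (0 : (Fin n → ℝ) × ℝ) 1, E), φ.Nullhomotopic)
    (b : B) : Subsingleton (HomotopyGroup.Pi n B b) := by
  have homotopic_const (f : GenLoop (Fin n) B b) : GenLoop.Homotopic f GenLoop.const := by
    obtain ⟨f', e, p_f', rfl, f'_eq⟩ :=
      exists_lift_constOn_boundary_of_isCoveringMap hp hp_surj hn f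
    have := (homotopicRel_boundary_of_nullhomotopic hE (g := .const _ e) f'_eq).comp_continuousMap
      ⟨p, hp.continuous⟩
    rwa [show ContinuousMap.comp ⟨p, hp.continuous⟩ f' = f.1 from ContinuousMap.ext p_f'] at this
  refine ⟨fun a c => ?_⟩
  induction a using Quotient.inductionOn
  induction c using Quotient.inductionOn
  exact Quotient.sound ((homotopic_const _).trans (homotopic_const _).symm)

section Collapse

variable {K S : Type*} [TopologicalSpace K] [TopologicalSpace S] {B : Set K} {v : S}
  {φ : ↥Bᶜ ≃ₜ ↥({v}ᶜ : Set S)}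

open scoped Classical in
/-- The map which collapses `B` to the point `v` and is the homeomorphism `φ` off `B`. -/
def collapseTo (φ : ↥Bᶜ ≃ₜ ↥({v}ᶜ : Set S)) (x : K) : S :=
  if h : x ∈ B then v else φ ⟨x, h⟩

theorem collapseTo_of_mem {x : K} (h : x ∈ B) : collapseTo φ x = v := dif_pos h

theorem collapseTo_of_notMem {x : K} (h : x ∉ B) : collapseTo φ x = φ ⟨x, h⟩ := dif_neg h

theorem collapseTo_eq_iff {x y : K} :
    collapseTo φ x = collapseTo φ y ↔ x = y ∨ x ∈ B ∧ y ∈ B := by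
  by_cases hx : x ∈ B <;> by_cases hy : y ∈ B
  · simp [collapseTo_of_mem, hx, hy]
  · simp only [collapseTo_of_mem hx, collapseTo_of_notMem hy, ne_of_mem_of_not_mem hx hy, hy,
      and_false, or_self, iff_false]
    exact Ne.symm (φ ⟨y, hy⟩).2
  · simp only [collapseTo_of_mem hy, collapseTo_of_notMem hx, (ne_of_mem_of_not_mem hy hx).symm, hx,
      false_and, or_self, iff_false]
    exact (φ ⟨x, hx⟩).2
  · simp [collapseTo_of_notMem, hx, hy, Subtype.val_inj]

theorem collapseTo_surjective (hB : B.Nonempty) : Function.Surjective (collapseTo φ) := by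
  intro y
  by_cases hy : y = v
  · exact hB.imp fun x hx => (collapseTo_of_mem hx).trans hy.symm
  · exact ⟨φ.symm ⟨y, hy⟩, (collapseTo_of_notMem (φ.symm ⟨y, hy⟩).2).trans (by simp)⟩

theorem preimage_collapseTo {C : Set S} (hv : v ∉ C) :
    collapseTo φ ⁻¹' C = Subtype.val '' (φ ⁻¹' (Subtype.val ⁻¹' C)) := by
  ext x
  constructor
  · intro hx
    have x_notMem : x ∉ B := fun h => hv (collapseTo_of_mem (φ := φ) h ▸ hx)
    rw [Set.mem_preimage, collapseTo_of_notMem x_notMem] at hx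
    exact ⟨⟨x, x_notMem⟩, hx, rfl⟩
  · rintro ⟨y, hy, rfl⟩
    rw [Set.mem_preimage, collapseTo_of_notMem y.2]
    exact hy

theorem continuous_collapseTo [T2Space K] [CompactSpace S] (hB : IsClosed B) :
    Continuous (collapseTo φ) := by
  have isClosed_preimage {C : Set S} (hC : IsClosed C) (hv : v ∉ C) :
      IsClosed (collapseTo φ ⁻¹' C) := by
    have range_subset : C ⊆ Set.range (Subtype.val : ↥({v}ᶜ : Set S) → S) := fun y hy =>
      ⟨⟨y, fun h => hv (Set.mem_singleton_iff.1 h ▸ hy)⟩, rfl⟩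
    rw [preimage_collapseTo hv, ← φ.image_symm]
    exact (((Topology.IsInducing.subtypeVal.isCompact_preimage_iff range_subset).2
      hC.isCompact).image φ.symm.continuous).image continuous_subtype_val |>.isClosed
  refine ⟨fun O hO => ?_⟩
  by_cases hv : v ∈ O
  · exact isClosed_compl_iff.1 (isClosed_preimage hO.isClosed_compl (not_not.2 hv))
  · rw [preimage_collapseTo hv]
    exact hB.isOpen_compl.isOpenMap_subtype_val _
      ((hO.preimage continuous_subtype_val).preimage φ.continuous)

end Collapse

/-- The open cube `(0, 1)ᴺ` is an open ball of the sup norm, hence homeomorphic to `ℝᴺ`. -/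
def complBoundaryHomeomorph (N : Type*) [Fintype N] :
    ↥(Cube.boundary N)ᶜ ≃ₜ (N → ℝ) :=
  Homeomorph.trans (Y := ball (0 : N → ℝ) 1)
    { toFun x := ⟨cubeToBall x.1, mem_ball_zero_iff.2
        ((norm_cubeToBall_le _).lt_of_ne fun h => x.2 (norm_cubeToBall_eq_one_iff.1 h))⟩
      invFun y := ⟨ballToCube y.1, fun h => by
        have := norm_cubeToBall_eq_one_iff.2 h
        rw [cubeToBall_ballToCube (mem_ball_zero_iff.1 y.2).le] at this
        exact (mem_ball_zero_iff.1 y.2).ne this⟩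
      left_inv x := Subtype.ext (ballToCube_cubeToBall _)
      right_inv y := Subtype.ext (cubeToBall_ballToCube (mem_ball_zero_iff.1 y.2).le)
      continuous_toFun := by fun_prop
      continuous_invFun := by fun_prop }
    Homeomorph.unitBall.symm

theorem isClosed_cubeBoundary (N : Type*) [Finite N] : IsClosed (Cube.boundary N) := by
  have := Fintype.ofFinite N
  have : Cube.boundary N = cubeToBall ⁻¹' sphere 0 1 := by
    ext x
    rw [Set.mem_preimage, mem_sphere_zero_iff_norm, norm_cubeToBall_eq_one_iff]
  exact this ▸ isClosed_sphere.preimage continuous_cubeToBall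

theorem exists_cube_collapse {m : ℕ} (hm : m ≠ 0)
    (v : sphere (0 : EuclideanSpace ℝ (Fin (m + 1))) 1) :
    ∃ q : C(Fin m → unitInterval, sphere (0 : EuclideanSpace ℝ (Fin (m + 1))) 1),
      Function.Surjective q ∧ (∀ x ∈ Cube.boundary (Fin m), q x = v) ∧
      ∀ x y, q x = q y → x = y ∨ x ∈ Cube.boundary (Fin m) ∧ y ∈ Cube.boundary (Fin m) := by
  have : Fact (Module.finrank ℝ (EuclideanSpace ℝ (Fin (m + 1))) = m + 1) :=
    ⟨finrank_euclideanSpace_fin⟩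
  let σ : ↥({v}ᶜ : Set (sphere (0 : EuclideanSpace ℝ (Fin (m + 1))) 1)) ≃ₜ (Fin m → ℝ) :=
    ((Homeomorph.setCongr (stereographic'_source v).symm).trans
      (stereographic' m v).toHomeomorphSourceTarget).trans
      ((Homeomorph.setCongr (stereographic'_target v)).trans (Homeomorph.Set.univ _)) |>.trans
        (EuclideanSpace.equiv (Fin m) ℝ).toHomeomorph
  let φ := (complBoundaryHomeomorph (Fin m)).trans σ.symm
  exact ⟨⟨collapseTo φ, continuous_collapseTo (isClosed_cubeBoundary (Fin m))⟩,
    collapseTo_surjective ⟨0, ⟨0, by omega⟩, Or.inl rfl⟩, fun _ => collapseTo_of_mem,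
    fun _ _ => collapseTo_eq_iff.1⟩

theorem nullhomotopic_of_subsingleton_homotopyGroup {Y : Type*} [TopologicalSpace Y] {m : ℕ}
    (hm : m ≠ 0) {v : sphere (0 : EuclideanSpace ℝ (Fin (m + 1))) 1}
    (f : C(sphere (0 : EuclideanSpace ℝ (Fin (m + 1))) 1, Y))
    (hY : Subsingleton (HomotopyGroup.Pi m Y (f v))) : f.Nullhomotopic := by
  obtain ⟨q, q_surjective, q_boundary, eq_or_boundary⟩ := exists_cube_collapse hm v
  let loop : GenLoop (Fin m) Y (f v) := ⟨f.comp q, fun x hx => congrArg f (q_boundary x hx)⟩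
  obtain ⟨K⟩ : GenLoop.Homotopic loop GenLoop.const :=
    Quotient.exact (hY.elim (⟦loop⟧ : HomotopyGroup.Pi m Y (f v)) ⟦GenLoop.const⟧)
  have K_boundary (t : unitInterval) {x} (hx : x ∈ Cube.boundary (Fin m)) : K (t, x) = f v :=
    (K.eq_fst t hx).trans (congrArg f (q_boundary x hx))
  let Q := (ContinuousMap.id unitInterval).prodMap q
  have isQuotientMap_Q : Topology.IsQuotientMap Q :=
    Q.continuous.isClosedMap.isQuotientMap Q.continuous
      (Function.surjective_id.prodMap q_surjective)
  have K_factors : Function.FactorsThrough K.toContinuousMap Q := by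
    rintro ⟨t, x⟩ ⟨t', x'⟩ h
    obtain ⟨rfl, hq⟩ := Prod.mk.inj h
    obtain rfl | ⟨hx, hx'⟩ := eq_or_boundary x x' hq
    · rfl
    · exact (K_boundary _ hx).trans (K_boundary _ hx').symm
  have lift_apply (t : unitInterval) (x : Fin m → unitInterval) :
      isQuotientMap_Q.lift K.toContinuousMap K_factors (t, q x) = K (t, x) :=
    DFunLike.congr_fun (isQuotientMap_Q.lift_comp _ K_factors) (t, x)
  refine ⟨f v, ⟨⟨isQuotientMap_Q.lift K.toContinuousMap K_factors, fun y => ?_, fun y => ?_⟩⟩⟩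
  · obtain ⟨x, rfl⟩ := q_surjective y
    exact (lift_apply 0 x).trans (K.apply_zero x)
  · obtain ⟨x, rfl⟩ := q_surjective y
    exact (lift_apply 1 x).trans (K.apply_one x)

end HigherHomotopy

/-! ### Admissible sets -/

/-- An open `G`-invariant subset of a `G`-space whose path components have their stabilisers
contained in members of `F`. For `E → Y` a universal covering, these are the preimages of the open
subsets of `Y` allowed in the definition of `cat_F(Y)`. -/
structure IsAdmissible {G : Type} [Group G] (F : Set (Subgroup G)) {E : Type*} [TopologicalSpace E]
    [SMul G E] (V : Set E) : Prop where
  isOpen : IsOpen V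
  smul_mem : ∀ (g : G), ∀ x ∈ V, g • x ∈ V
  exists_mem : ∀ x ∈ V, ∃ H ∈ F, ∀ g : G, JoinedIn V x (g • x) → g ∈ H

/-- A `G`-invariant map `E → Y` which induces the inverse of `e : π₁(Y, y₀) ≅ G` on loops that lift
to paths in `E` from `x₀` to a translate of `x₀`. -/
structure IsClassifyingMap {G : Type} [Group G] {E Y : Type} [TopologicalSpace E]
    [TopologicalSpace Y] [SMul G E] {y₀ : Y} (e : FundamentalGroup Y y₀ ≃* G) (x₀ : E)
    (f : E → Y) : Prop where
  continuous : Continuous f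
  map_smul : ∀ (g : G) x, f (g • x) = f x
  map_base : f x₀ = y₀
  apply_loop : ∀ (g : G) (P : Path x₀ (g • x₀)) (γ : Path y₀ y₀), (∀ t, f (P t) = γ t) →
    e (pathToPi1 ⟦γ⟧) = g⁻¹

section ClassifyingMap

variable {G : Type} [Group G] {E Y : Type} [TopologicalSpace E] [TopologicalSpace Y] [MulAction G E]
  [ContinuousConstSMul G E] {y₀ : Y} {e : FundamentalGroup Y y₀ ≃* G} {x₀ : E} {f : E → Y}

theorem IsClassifyingMap.apply_conj (hf : IsClassifyingMap e x₀ f) {x : E} (Q : Path x₀ x) (g : G)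
    (P : Path x (g • x)) {y : Y} {q : Path y₀ y} {p : Path y y} (hq : ∀ t, f (Q t) = q t)
    (hp : ∀ t, f (P t) = p t) :
    e (pathToPi1 (Path.Homotopic.Quotient.trans ⟦q⟧
      (Path.Homotopic.Quotient.trans ⟦p⟧ ⟦q.symm⟧))) = g⁻¹ := by
  refine hf.apply_loop g (Q.trans (P.trans (Q.map (continuous_const_smul g)).symm))
    (q.trans (p.trans q.symm)) fun t => ?_
  simp only [Path.trans_apply, Path.symm_apply, Path.map_coe, Function.comp_apply]
  split_ifs
  · exact hq _
  · exact hp _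
  · exact (hf.map_smul _ _).trans (hq _)

theorem IsClassifyingMap.isAdmissible_preimage [PathConnectedSpace E] {F : Set (Subgroup G)}
    (hf : IsClassifyingMap e x₀ f) {U : Set Y} (hU : IsOpen U) (hUF : FCoverCondition y₀ e F U) :
    IsAdmissible F (f ⁻¹' U) where
  isOpen := hU.preimage hf.continuous
  smul_mem g x hx := Set.mem_preimage.2 ((hf.map_smul g x).symm ▸ hx)
  exists_mem x hx := by
    let Q := PathConnectedSpace.somePath x₀ x
    let q : Path y₀ (f x) := (Q.map hf.continuous).cast hf.map_base.symm rfl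
    refine (hUF (f x) hx q).imp fun H ⟨hHF, hH⟩ => ⟨hHF, fun g ⟨P, hP⟩ => ?_⟩
    let p : Path (f x) (f x) := (P.map hf.continuous).cast rfl (hf.map_smul g x).symm
    refine inv_mem_iff.1 ?_
    rw [← hf.apply_conj Q g P (q := q) (p := p) (fun _ => rfl) fun _ => rfl]
    exact hH p hP

theorem IsClassifyingMap.fCoverCondition_image {F : Set (Subgroup G)} (hf : IsClassifyingMap e x₀ f)
    (hf_cov : IsQuotientCoveringMap f G) {V : Set E} (hV : IsAdmissible F V) :
    FCoverCondition y₀ e F (f '' V) := by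
  have mem_of_map_mem {x : E} (hx : f x ∈ f '' V) : x ∈ V := by
    obtain ⟨y, hy, hxy⟩ := hx
    obtain ⟨g, rfl⟩ := hf_cov.apply_eq_iff_mem_orbit.1 hxy.symm
    exact hV.smul_mem g y hy
  have lift {b y : Y} (q : Path b y) {x : E} (hx : f x = b) :
      ∃ (x' : E) (Q : Path x x'), f x' = y ∧ ∀ t, f (Q t) = q t := by
    obtain ⟨Q, hQ, rfl⟩ := hf_cov.isCoveringMap.exists_path_lifts q x (q.source.trans hx.symm)
    have f_Q (t) : f (Q t) = q t := congrFun hQ t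
    exact ⟨Q 1, ⟨Q, rfl, rfl⟩, (f_Q 1).trans q.target, f_Q⟩
  intro y hy q
  obtain ⟨x, Q, rfl, hQ⟩ := lift q hf.map_base
  refine (hV.exists_mem x (mem_of_map_mem hy)).imp fun H ⟨hHF, hH⟩ => ⟨hHF, fun p hp => ?_⟩
  obtain ⟨x', P, hx', hP⟩ := lift p rfl
  obtain ⟨g, rfl⟩ := hf_cov.apply_eq_iff_mem_orbit.1 hx'
  rw [hf.apply_conj Q g P hQ hP]
  exact H.inv_mem (hH g ⟨P, fun t => mem_of_map_mem (hP t ▸ hp t)⟩)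

end ClassifyingMap

namespace MilnorJoin

section ClassifyingSpace

instance {S : Type*} [Nonempty S] : PathConnectedSpace (MilnorJoin S) where
  nonempty := ⟨vertex (Classical.arbitrary S, 0)⟩
  joined x y := by
    obtain ⟨z, ⟨H⟩⟩ := nullhomotopic ⟨fun b => cond b x y, continuous_of_discreteTopology⟩
    exact ⟨(H.evalAt true).trans (H.evalAt false).symm⟩

instance {S : Type*} [Nonempty S] : SimplyConnectedSpace (MilnorJoin S) :=
  simplyConnectedSpace_of_nullhomotopic nullhomotopic

variable (G : Type) [Group G]

instance : PathConnectedSpace (Base G) :=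
  isQuotientCoveringMap_toBase.surjective.pathConnectedSpace isQuotientCoveringMap_toBase.continuous

/-- The base point of `EG`. -/
def basepoint : MilnorJoin G := vertex (1, 0)

/-- The group `G` is the deck transformation group of `EG → BG`. The inversion turns the
anti-isomorphism of covering theory into an isomorphism. -/
def fundamentalGroupEquiv : FundamentalGroup (Base G) (toBase (basepoint G)) ≃* G :=
  (isQuotientCoveringMap_toBase.fundamentalGroupEquiv
    (⟨basepoint G, rfl⟩ : toBase ⁻¹' {toBase (basepoint G)})).trans (MulEquiv.inv' G).symm

theorem isClassifyingMap_toBase :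
    IsClassifyingMap (fundamentalGroupEquiv G) (basepoint G) toBase where
  continuous := isQuotientCoveringMap_toBase.continuous
  map_smul := toBase_smul
  map_base := rfl
  apply_loop g P γ hP := by
    have cov := isQuotientCoveringMap_toBase (G := G)
    let e₀ : toBase ⁻¹' {toBase (basepoint G)} := ⟨basepoint G, rfl⟩
    let e₁ : toBase ⁻¹' {toBase (basepoint G)} := ⟨g • basepoint G, toBase_smul _ _⟩
    have map_eq : P.map cov.continuous = γ.cast rfl (toBase_smul g _) := Path.ext (funext hP)
    have monodromy_eq : cov.isCoveringMap.monodromy ⟦γ⟧ e₀ = e₁ :=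
      cov.isCoveringMap.monodromy_eq_of_map_eq (ex := e₀) (ey := e₁) ⟦P⟧
        (congrArg Path.Homotopic.Quotient.mk map_eq)
    have deck_eq : cov.fundamentalGroupToMulOpposite e₀ (pathToPi1 ⟦γ⟧) = MulOpposite.op g :=
      cov.fundamentalGroupToMulOpposite_apply_eq_Iff.2 (congrArg Subtype.val monodromy_eq).symm
    exact congrArg (fun a => (MulOpposite.unop a)⁻¹) deck_eq

/-- Milnor's model of the classifying space of `G`. -/
def classifyingModel : ClassifyingModel G where
  space := Base G
  cw := cwStructure G
  pathConnected := inferInstance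
  basepoint := toBase (basepoint G)
  aspherical _ hn := subsingleton_homotopyGroup_of_isCoveringMap
    isQuotientCoveringMap_toBase.isCoveringMap isQuotientCoveringMap_toBase.surjective hn
    nullhomotopic _
  iso := fundamentalGroupEquiv G

variable {G}

theorem catGroup_le_of_isAdmissible {F : Set (Subgroup G)} {n : ℕ}
    {V : Fin (n + 1) → Set (MilnorJoin G)} (hV : ∀ j, IsAdmissible F (V j))
    (hV_cover : ∀ x, ∃ j, x ∈ V j) : catGroup G F ≤ n := by
  refine (sInf_le ⟨classifyingModel G, rfl⟩ : catGroup G F ≤ _).trans (sInf_le ⟨n, rfl, ?_⟩)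
  have cov := isQuotientCoveringMap_toBase (G := G)
  refine ⟨fun j => toBase '' V j, fun j => cov.isOpenQuotientMap.isOpenMap _ (hV j).isOpen,
    fun y => ?_, fun j => (isClassifyingMap_toBase G).fCoverCondition_image cov (hV j)⟩
  obtain ⟨x, rfl⟩ := cov.surjective y
  exact (hV_cover x).imp fun j hj => Set.mem_image_of_mem _ hj

end ClassifyingSpace

end MilnorJoin

/-! ### Equivariant maps out of Milnor's join -/

namespace MilnorJoin

section BoundarySphere

open Metric

variable {S : Type*} {n : ℕ}

theorem support_ofFace_eq_of_forall_pos {s : Face S} {w : stdSimplex ℝ s.1}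
    (hw : ∀ p, 0 < w p) :
    (ofFace s w).weights.support = s.1 :=
  (support_ofFace_subset s w).antisymm fun p hp => Finsupp.mem_support_iff.2 <| by
    rw [ofFace_apply s w ⟨p, hp⟩]
    exact (hw _).ne'

theorem exists_support_eq {s : Face S} (hs : s.1.card ≠ 0) :
    ∃ x : MilnorJoin S, x.weights.support = s.1 := by
  have := (Finset.card_ne_zero.1 hs).to_subtype
  refine ⟨ofFace s stdSimplex.barycenter, support_ofFace_eq_of_forall_pos fun p => ?_⟩
  change (0 : ℝ) < (Fintype.card s.1 : ℝ)⁻¹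
  positivity

theorem support_ofFace_ssubset {s : Face S} {w : stdSimplex ℝ s.1}
    (hw : ¬∀ p, 0 < w p) :
    (ofFace s w).weights.support ⊂ s.1 := by
  refine (support_ofFace_subset s w).ssubset_of_ne fun h => hw fun p => ?_
  have p_mem : p.1 ∈ (ofFace s w).weights.support := h.symm ▸ p.2
  exact ofFace_apply s w p ▸ weights_pos p_mem

/-- The boundary of an `n`-simplex, parametrized by the round sphere. -/
def boundarySphere {s : Face S} (hs : s.1.card = n + 1) :
    C(sphere (0 : EuclideanSpace ℝ (Fin n)) 1, MilnorJoin S) where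
  toFun z := ofFace s (unitDiskHomeomorph ((Fintype.card_coe _).trans hs)
    ⟨z, sphere_subset_closedBall z.2⟩)
  continuous_toFun := (continuous_ofFace s).comp
    ((Homeomorph.continuous _).comp (continuous_subtype_val.subtype_mk _))

theorem support_boundarySphere_ssubset {s : Face S} (hs : s.1.card = n + 1)
    (z : sphere (0 : EuclideanSpace ℝ (Fin n)) 1) :
    (boundarySphere hs z).weights.support ⊂ s.1 :=
  support_ofFace_ssubset fun h =>
    ((norm_lt_one_iff_unitDiskHomeomorph _ _).2 h).ne (mem_sphere_zero_iff_norm.1 z.2)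

theorem exists_boundarySphere_eq {s : Face S} (hs : s.1.card = n + 1) {x : MilnorJoin S}
    (hx : x.weights.support ⊂ s.1) : ∃ z, boundarySphere hs z = x := by
  let e : UnitDisk n ≃ₜ stdSimplex ℝ s.1 := unitDiskHomeomorph ((Fintype.card_coe _).trans hs)
  let z := e.symm (x.toFace s.1 hx.subset)
  have ofFace_z : ofFace s (e z) = x := by rw [e.apply_symm_apply, ofFace_toFace]
  have norm_z : ‖(z : EuclideanSpace ℝ (Fin n))‖ = 1 := by
    refine (mem_closedBall_zero_iff.1 z.2).eq_of_not_lt fun hz => hx.ne ?_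
    rw [← ofFace_z, support_ofFace_eq_of_forall_pos ((norm_lt_one_iff_unitDiskHomeomorph _ z).1 hz)]
  exact ⟨⟨z, mem_sphere_zero_iff_norm.2 norm_z⟩, ofFace_z⟩

end BoundarySphere

section Extend

variable {G : Type*} [Group G]

/-- The translation that normalizes the carrier of `x`. -/
def normalizer (x : MilnorJoin G) : G := x.exists_isNormalized_smul.choose

theorem isNormalized_normalizer_smul (x : MilnorJoin G) :
    IsNormalized (x.normalizer • x).weights.support :=
  x.exists_isNormalized_smul.choose_spec

theorem normalizer_eq_of_isNormalized {g : G} {x : MilnorJoin G}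
    (h : IsNormalized (g • x).weights.support) : x.normalizer = g :=
  mul_inv_eq_one.1 <| eq_one_of_isNormalized h <| by
    rw [mul_smul, inv_smul_smul]
    exact isNormalized_normalizer_smul x

theorem normalizer_smul (g : G) (x : MilnorJoin G) :
    (g • x).normalizer = x.normalizer * g⁻¹ :=
  normalizer_eq_of_isNormalized <| by
    rw [mul_smul, inv_smul_smul]
    exact isNormalized_normalizer_smul x

theorem support_smul_subset_iff (g : G) {x y : MilnorJoin G} :
    (g • x).weights.support ⊆ (g • y).weights.support ↔
      x.weights.support ⊆ y.weights.support := by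
  refine ⟨fun h q hq => ?_, fun h q hq => mem_support_smul.2 (h (mem_support_smul.1 hq))⟩
  have := h (mem_support_smul (q := (g * q.1, q.2)).2 (by rwa [inv_mul_cancel_left]))
  simpa only [inv_mul_cancel_left] using mem_support_smul.1 this

theorem support_smul_ssubset_iff (g : G) {x y : MilnorJoin G} :
    (g • x).weights.support ⊂ (g • y).weights.support ↔
      x.weights.support ⊂ y.weights.support := by
  simp only [ssubset_iff_subset_not_subset, support_smul_subset_iff]

variable {Z : Type*} [MulAction G Z] {n : ℕ} {f : MilnorJoin G → Z}
  {F : Face G → MilnorJoin G → Z}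

/-- The extension of `f` over the simplices with more than `n` vertices which is given by `F` on
normalized simplices and is equivariant. -/
def extend (n : ℕ) (f : MilnorJoin G → Z) (F : Face G → MilnorJoin G → Z) (x : MilnorJoin G) : Z :=
  if x.weights.support.card ≤ n then f x
  else x.normalizer⁻¹ • F (x.normalizer • x).carrier (x.normalizer • x)

theorem extend_of_card_le {x : MilnorJoin G} (hx : x.weights.support.card ≤ n) :
    extend n f F x = f x :=
  if_pos hx

end Extend

section Skeleton

open Metric

variable {G : Type*} [Group G] {Z : Type*} [TopologicalSpace Z] [MulAction G Z] {n : ℕ}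
  {f : MilnorJoin G → Z}

/-- A function on `EG` whose restriction to the union of the simplices with at most `n` vertices is
equivariant and continuous. Its values elsewhere are irrelevant. -/
structure IsEquivariantOnSkeleton (n : ℕ) (f : MilnorJoin G → Z) : Prop where
  map_smul : ∀ (g : G) (x : MilnorJoin G), x.weights.support.card ≤ n → f (g • x) = g • f x
  continuous_comp_ofFace : ∀ s : Face G, s.1.card ≤ n → Continuous (f ∘ ofFace s)

theorem IsEquivariantOnSkeleton.continuous_comp (hf : IsEquivariantOnSkeleton n f) {s : Face G}
    (hs : s.1.card = n + 1) {A : Type*} [TopologicalSpace A] {α : A → MilnorJoin G}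
    (hα : Continuous α) (hαs : ∀ a, (α a).weights.support ⊂ s.1) : Continuous (f ∘ α) := by
  classical
  let C (p : s.1) : Set A := {a | (α a).weights p = 0}
  have isClosed_C (p : s.1) : IsClosed (C p) :=
    isClosed_eq ((continuous_weights _).comp hα) continuous_const
  have C_cover : ⋃ p, C p = Set.univ := Set.eq_univ_of_forall fun a => by
    obtain ⟨p, hp, hpa⟩ := Finset.exists_of_ssubset (hαs a)
    exact Set.mem_iUnion.2 ⟨⟨p, hp⟩, Finsupp.notMem_support_iff.1 hpa⟩
  refine (locallyFinite_of_finite C).continuous C_cover isClosed_C fun p => ?_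
  let t : Face G := ⟨s.1.erase p, s.2.mono (Finset.coe_subset.2 (Finset.erase_subset _ _))⟩
  have ht : t.1.card ≤ n := by rw [Finset.card_erase_of_mem p.2, hs, Nat.add_sub_cancel]
  have support_subset (a : C p) : (α a).weights.support ⊆ t.1 :=
    Finset.subset_erase.2 ⟨(hαs a).subset, Finsupp.notMem_support_iff.2 a.2⟩
  rw [continuousOn_iff_continuous_domRestrict]
  refine ((hf.continuous_comp_ofFace t ht).comp (continuous_toFace support_subset
    (hα.comp continuous_subtype_val))).congr fun a => ?_
  exact congrArg f (ofFace_toFace _ t (support_subset a))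

/-- The restriction of `f` to the boundary of an `n`-simplex, as a map on the round sphere. -/
def IsEquivariantOnSkeleton.boundaryMap (hf : IsEquivariantOnSkeleton n f) {s : Face G}
    (hs : s.1.card = n + 1) : C(sphere (0 : EuclideanSpace ℝ (Fin n)) 1, Z) where
  toFun z := f (boundarySphere hs z)
  continuous_toFun := hf.continuous_comp hs (boundarySphere hs).continuous
    (support_boundarySphere_ssubset hs)

theorem IsEquivariantOnSkeleton.exists_extension_face (hf : IsEquivariantOnSkeleton n f)
    {s : Face G} (hs : s.1.card = n + 1) (hnull : (hf.boundaryMap hs).Nullhomotopic) :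
    ∃ F : MilnorJoin G → Z, Continuous (F ∘ ofFace s) ∧
      ∀ x : MilnorJoin G, x.weights.support ⊂ s.1 → F x = f x := by
  let e : UnitDisk n ≃ₜ stdSimplex ℝ s.1 := unitDiskHomeomorph ((Fintype.card_coe _).trans hs)
  obtain ⟨F, hF⟩ := exists_extension_of_nullhomotopic hnull
  have extend_ofFace (w) : Function.extend (ofFace s) (F ∘ e.symm) f (ofFace s w) = F (e.symm w) :=
    (ofFace_injective s).extend_apply _ _ w
  refine ⟨Function.extend (ofFace s) (F ∘ e.symm) f,
    (F.continuous.comp e.symm.continuous).congr fun w => (extend_ofFace w).symm, fun x hx => ?_⟩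
  obtain ⟨z, rfl⟩ := exists_boundarySphere_eq hs hx
  exact (extend_ofFace _).trans ((congrArg F (e.symm_apply_apply _)).trans (hF z))

variable {F : Face G → MilnorJoin G → Z}

theorem extend_smul (hf : IsEquivariantOnSkeleton n f) (g : G) (x : MilnorJoin G) :
    extend n f F (g • x) = g • extend n f F x := by
  by_cases hx : x.weights.support.card ≤ n
  · rw [extend_of_card_le hx, extend_of_card_le ((card_support_smul g x).trans_le hx),
      hf.map_smul g x hx]
  · have hgx : ¬(g • x).weights.support.card ≤ n := card_support_smul g x ▸ hx
    rw [extend, if_neg hgx, normalizer_smul, mul_smul, inv_smul_smul, mul_inv_rev, inv_inv,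
      mul_smul, extend, if_neg hx]

theorem extend_eq_of_support_subset (hf : IsEquivariantOnSkeleton n f)
    (hF : ∀ s : Face G, s.1.card = n + 1 → ∀ x : MilnorJoin G, x.weights.support ⊂ s.1 →
      F s x = f x)
    {x₀ x : MilnorJoin G} (hx₀ : x₀.weights.support.card = n + 1)
    (hx : x.weights.support ⊆ x₀.weights.support) :
    extend n f F x = x₀.normalizer⁻¹ • F (x₀.normalizer • x₀).carrier (x₀.normalizer • x) := by
  rcases hx.ssubset_or_eq with hx | hx
  · have x_card : x.weights.support.card ≤ n :=
      Nat.le_of_lt_succ ((Finset.card_lt_card hx).trans_eq hx₀)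
    rw [extend_of_card_le x_card, hF _ ((card_support_smul _ x₀).trans hx₀) _
      ((support_smul_ssubset_iff _).2 hx), hf.map_smul _ x x_card, inv_smul_smul]
  · have support_eq (g : G) : (g • x).weights.support = (g • x₀).weights.support :=
      Finset.ext fun q => by rw [mem_support_smul, mem_support_smul, hx]
    have normalizer_eq : x.normalizer = x₀.normalizer :=
      normalizer_eq_of_isNormalized (support_eq _ ▸ x₀.isNormalized_normalizer_smul)
    have carrier_eq (g : G) : (g • x).carrier = (g • x₀).carrier := Subtype.ext (support_eq g)
    rw [extend, if_neg (by lia), normalizer_eq, carrier_eq]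

theorem isEquivariantOnSkeleton_extend [ContinuousConstSMul G Z] (hf : IsEquivariantOnSkeleton n f)
    (hF : ∀ s : Face G, s.1.card = n + 1 → ∀ x : MilnorJoin G, x.weights.support ⊂ s.1 →
      F s x = f x)
    (hF_cont : ∀ s : Face G, s.1.card = n + 1 → Continuous (F s ∘ ofFace s)) :
    IsEquivariantOnSkeleton (n + 1) (extend n f F) where
  map_smul g x _ := extend_smul hf g x
  continuous_comp_ofFace s hs := by
    rcases hs.lt_or_eq with hs | hs
    · exact (hf.continuous_comp_ofFace s (Nat.le_of_lt_succ hs)).congr fun w =>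
        (extend_of_card_le ((Finset.card_le_card (support_ofFace_subset s w)).trans
          (Nat.le_of_lt_succ hs))).symm
    · obtain ⟨x₀, hx₀⟩ := exists_support_eq (n.succ_ne_zero.symm.trans_eq hs.symm).symm
      have hx₀_card : x₀.weights.support.card = n + 1 := hx₀ ▸ hs
      let t := (x₀.normalizer • x₀).carrier
      have support_subset (w) : (x₀.normalizer • ofFace s w).weights.support ⊆ t.1 :=
        (support_smul_subset_iff _).2 (hx₀.symm ▸ support_ofFace_subset s w)
      refine Continuous.congr (f := fun w => x₀.normalizer⁻¹ •
        F t (ofFace t ((x₀.normalizer • ofFace s w).toFace t.1 (support_subset w)))) ?_ fun w => ?_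
      · exact ((hF_cont t ((card_support_smul _ x₀).trans hx₀_card)).comp
          (continuous_toFace support_subset
            ((continuous_const_smul _).comp (continuous_ofFace s)))).const_smul _
      · rw [ofFace_toFace]
        exact (extend_eq_of_support_subset hf hF hx₀_card
          (hx₀.symm ▸ support_ofFace_subset s w)).symm

theorem IsEquivariantOnSkeleton.exists_succ [ContinuousConstSMul G Z]
    (hf : IsEquivariantOnSkeleton n f)
    (hext : ∀ s : Face G, s.1.card = n + 1 → ∃ F : MilnorJoin G → Z, Continuous (F ∘ ofFace s) ∧
      ∀ x : MilnorJoin G, x.weights.support ⊂ s.1 → F x = f x) :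
    ∃ f', IsEquivariantOnSkeleton (n + 1) f' ∧
      ∀ x : MilnorJoin G, x.weights.support.card ≤ n → f' x = f x := by
  have : Nonempty (MilnorJoin G → Z) := ⟨f⟩
  choose! F hF_cont hF using hext
  exact ⟨extend n f F, isEquivariantOnSkeleton_extend hf hF hF_cont, fun _ => extend_of_card_le⟩

theorem IsEquivariantOnSkeleton.exists_equivariant [ContinuousConstSMul G Z] {k : ℕ}
    {f₀ : MilnorJoin G → Z} (hf₀ : IsEquivariantOnSkeleton k f₀)
    (hext : ∀ n ≥ k, ∀ f, IsEquivariantOnSkeleton n f →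
      (∀ x : MilnorJoin G, x.weights.support.card ≤ k → f x = f₀ x) →
      ∀ s : Face G, s.1.card = n + 1 → ∃ F : MilnorJoin G → Z, Continuous (F ∘ ofFace s) ∧
        ∀ x : MilnorJoin G, x.weights.support ⊂ s.1 → F x = f x) :
    ∃ f : MilnorJoin G → Z, Continuous f ∧ (∀ (g : G) x, f (g • x) = g • f x) ∧
      ∀ x : MilnorJoin G, x.weights.support.card ≤ k → f x = f₀ x := by
  have step (n : ℕ) (f : MilnorJoin G → Z) (hf : IsEquivariantOnSkeleton (k + n) f ∧
      ∀ x : MilnorJoin G, x.weights.support.card ≤ k → f x = f₀ x) :=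
    hf.1.exists_succ (hext _ (Nat.le_add_right k n) f hf.1 hf.2)
  have : Nonempty (MilnorJoin G → Z) := ⟨f₀⟩
  choose! next next_skeleton next_eq using step
  let f : ℕ → MilnorJoin G → Z := Nat.rec f₀ next
  have hf (n : ℕ) : IsEquivariantOnSkeleton (k + n) (f n) ∧
      ∀ x : MilnorJoin G, x.weights.support.card ≤ k → f n x = f₀ x := by
    induction n with
    | zero => exact ⟨hf₀, fun _ _ => rfl⟩
    | succ n ih => exact ⟨next_skeleton n _ ih, fun x hx =>
        (next_eq n _ ih x (hx.trans (Nat.le_add_right k n))).trans (ih.2 x hx)⟩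
  have f_eq {m n : ℕ} (hmn : m ≤ n) (x : MilnorJoin G) (hx : x.weights.support.card ≤ m) :
      f n x = f m x := by
    induction n, hmn using Nat.le_induction with
    | base => rfl
    | succ n hmn ih => exact (next_eq n _ (hf n) x (by lia)).trans ih
  refine ⟨fun x => f x.weights.support.card x, continuous_iff_face.2 fun s => ?_,
    fun g x => ?_, fun x hx => (hf _).2 x hx⟩
  · exact ((hf s.1.card).1.continuous_comp_ofFace s (Nat.le_add_left _ _)).congr fun w =>
      f_eq (Finset.card_le_card (support_ofFace_subset s w)) _ le_rfl
  · change f (g • x).weights.support.card _ = _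
    rw [card_support_smul, (hf _).1.map_smul g x (Nat.le_add_left _ _)]

end Skeleton

section Contractible

theorem card_support_pos {S : Type*} (x : MilnorJoin S) : 0 < x.weights.support.card :=
  Finset.card_pos.2 (x.exists_weights_pos.imp fun _ hp => Finsupp.mem_support_iff.2 hp.ne')

variable {G : Type*} [Group G] {Z : Type*} [TopologicalSpace Z] [MulAction G Z]

theorem isEquivariantOnSkeleton_zero (f : MilnorJoin G → Z) : IsEquivariantOnSkeleton 0 f where
  map_smul _ x hx := absurd x.card_support_pos hx.not_gt
  continuous_comp_ofFace s hs := by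
    have : IsEmpty (stdSimplex ℝ s.1) := ⟨fun w => (ofFace s w).card_support_pos.not_ge <|
      (Finset.card_le_card (support_ofFace_subset s w)).trans hs⟩
    exact continuous_of_const fun w => isEmptyElim w

theorem exists_equivariant_of_contractibleSpace [ContinuousConstSMul G Z] [ContractibleSpace Z] :
    ∃ f : MilnorJoin G → Z, Continuous f ∧ ∀ (g : G) x, f (g • x) = g • f x := by
  have f₀ : MilnorJoin G → Z := fun _ => Classical.arbitrary Z
  obtain ⟨f, hf, hf_smul, -⟩ := (isEquivariantOnSkeleton_zero f₀).exists_equivariant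
    fun n _ f hf _ s hs => hf.exists_extension_face hs
      ((id_nullhomotopic Z).comp_left (hf.boundaryMap hs))
  exact ⟨f, hf, hf_smul⟩

end Contractible

end MilnorJoin

section Triangle

open unitInterval

/-- The barycentric coordinates of the image of `(r, t)` under `squareToTriangle`. -/
def triangleWeights (z : I × I) : Fin 3 → ℝ :=
  ![1 - z.2 - z.1 * min (z.2 : ℝ) (1 - z.2), 2 * (z.1 * min (z.2 : ℝ) (1 - z.2)),
    z.2 - z.1 * min (z.2 : ℝ) (1 - z.2)]

theorem triangleWeights_mem_stdSimplex (z : I × I) : triangleWeights z ∈ stdSimplex ℝ (Fin 3) := by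
  obtain ⟨⟨r, hr₀, hr₁⟩, t, ht₀, ht₁⟩ := z
  have min_nonneg : 0 ≤ min t (1 - t) := le_min ht₀ (sub_nonneg.2 ht₁)
  have mul_le : r * min t (1 - t) ≤ min t (1 - t) := mul_le_of_le_one_left min_nonneg hr₁
  refine ⟨Fin.forall_fin_succ.2 ⟨?_, Fin.forall_fin_two.2 ⟨?_, ?_⟩⟩, ?_⟩
  · exact sub_nonneg.2 (mul_le.trans (min_le_right _ _))
  · exact mul_nonneg zero_le_two (mul_nonneg hr₀ min_nonneg)
  · exact sub_nonneg.2 (mul_le.trans (min_le_left _ _))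
  · simp only [triangleWeights, Fin.sum_univ_three, Matrix.cons_val]
    ring

/-- The parametrization of the triangle by the square which sends the lower edge of the square to
the edge `02` and the upper edge to the broken line `012`, and collapses the vertical edges. -/
def squareToTriangle : C(I × I, stdSimplex ℝ (Fin 3)) where
  toFun z := ⟨triangleWeights z, triangleWeights_mem_stdSimplex z⟩
  continuous_toFun := Continuous.subtype_mk (by unfold triangleWeights; fun_prop) _

theorem squareToTriangle_eq_iff {r t : I} {w : stdSimplex ℝ (Fin 3)} :
    squareToTriangle (r, t) = w ↔
      (t : ℝ) = w 2 + w 1 / 2 ∧ 2 * ((r : ℝ) * min (t : ℝ) (1 - t)) = w 1 := by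
  have sum_w : w 0 + w 1 + w 2 = 1 := (Fin.sum_univ_three _).symm.trans (stdSimplex.sum_eq_one w)
  refine ⟨?_, fun ⟨_, hr⟩ => stdSimplex.ext
    (funext (Fin.forall_fin_succ.2 ⟨?_, Fin.forall_fin_two.2 ⟨hr, ?_⟩⟩))⟩
  · rintro rfl
    refine ⟨?_, rfl⟩
    change (t : ℝ) = (t - r * min (t : ℝ) (1 - t)) + 2 * (r * min (t : ℝ) (1 - t)) / 2
    ring
  · change 1 - (t : ℝ) - r * min (t : ℝ) (1 - t) = w 0
    linarith
  · change (t : ℝ) - r * min (t : ℝ) (1 - t) = w 2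
    linarith

theorem squareToTriangle_surjective : Function.Surjective squareToTriangle := fun w => by
  have sum_w : w 0 + w 1 + w 2 = 1 := (Fin.sum_univ_three _).symm.trans (stdSimplex.sum_eq_one w)
  have w_nonneg (i) : 0 ≤ w i := stdSimplex.zero_le w i
  let t := w 2 + w 1 / 2
  let m := 2 * min t (1 - t)
  have w_one_le : w 1 ≤ m := by
    have : w 1 / 2 ≤ min t (1 - t) := le_min (by grind) (by grind)
    linarith
  refine ⟨(⟨w 1 / m, div_nonneg (w_nonneg 1) ((w_nonneg 1).trans w_one_le),
    div_le_one_of_le₀ w_one_le ((w_nonneg 1).trans w_one_le)⟩, ⟨t, by grind, by grind⟩),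
    squareToTriangle_eq_iff.2 ⟨rfl, ?_⟩⟩
  calc 2 * (w 1 / m * min t (1 - t)) = w 1 / m * m := by ring
    _ = w 1 := div_mul_cancel_of_imp fun hm => (w_one_le.trans_eq hm).antisymm (w_nonneg 1)

theorem eq_of_squareToTriangle_eq {r r' t t' : I}
    (h : squareToTriangle (r, t) = squareToTriangle (r', t')) :
    t = t' ∧ (r = r' ∨ t = 0 ∨ t = 1) := by
  obtain ⟨ht, hr⟩ := squareToTriangle_eq_iff.1 h
  obtain ⟨ht', hr'⟩ := squareToTriangle_eq_iff.1 (rfl : squareToTriangle (r', t') = _)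
  obtain rfl : t = t' := Subtype.ext (ht.trans ht'.symm)
  refine ⟨rfl, ?_⟩
  rcases mul_eq_mul_right_iff.1 (mul_left_cancel₀ two_ne_zero (hr.trans hr'.symm)) with h | h
  · exact Or.inl (Subtype.ext h)
  · rcases min_eq_iff.1 h with ⟨h, -⟩ | ⟨h, -⟩
    · exact Or.inr (Or.inl (Subtype.ext h))
    · exact Or.inr (Or.inr (Subtype.ext (sub_eq_zero.1 h).symm))

variable {Y : Type*} [TopologicalSpace Y]

theorem exists_comp_squareToTriangle_eq {y₀ y₁ : Y} {p q : Path y₀ y₁} (K : p.Homotopy q) :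
    ∃ F : C(stdSimplex ℝ (Fin 3), Y), ∀ z, F (squareToTriangle z) = K z := by
  have quot : Topology.IsQuotientMap squareToTriangle :=
    squareToTriangle.continuous.isClosedMap.isQuotientMap squareToTriangle.continuous
      squareToTriangle_surjective
  have factors : Function.FactorsThrough K.toContinuousMap squareToTriangle := by
    rintro ⟨r, t⟩ ⟨r', t'⟩ h
    obtain ⟨rfl, rfl | rfl | rfl⟩ := eq_of_squareToTriangle_eq h
    · rfl
    · exact (K.source r).trans (K.source r').symm
    · exact (K.target r).trans (K.target r').symm
  exact ⟨quot.lift K.toContinuousMap factors, DFunLike.congr_fun (quot.lift_comp _ factors)⟩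

theorem exists_triangle_filling {y₀ : Y} (P : Fin 3 → Fin 3 → Path y₀ y₀)
    (hP : (P 0 2).Homotopic ((P 0 1).trans (P 1 2))) :
    ∃ F : C(stdSimplex ℝ (Fin 3), Y), ∀ (k : Fin 3) (w : stdSimplex ℝ (Fin 3)), w k = 0 →
      F w = (P (k.succAbove 0) (k.succAbove 1)).extend (w (k.succAbove 1)) := by
  obtain ⟨K⟩ := hP
  obtain ⟨F, hF⟩ := exists_comp_squareToTriangle_eq K
  have F_eq {r t : I} {w} (h : squareToTriangle (r, t) = w) : F w = K (r, t) := h ▸ hF (r, t)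
  have F_upper {w} {t : I} (ht : (t : ℝ) = w 2 + w 1 / 2) (hw : 2 * min (t : ℝ) (1 - t) = w 1) :
      F w = ((P 0 1).trans (P 1 2)).extend t := by
    rw [F_eq (r := 1) (squareToTriangle_eq_iff.2 ⟨ht, by rwa [Set.Icc.coe_one, one_mul]⟩),
      Path.extend_apply _ t.2]
    exact K.apply_one t
  have sum_w (w : stdSimplex ℝ (Fin 3)) : w 0 + w 1 + w 2 = 1 :=
    (Fin.sum_univ_three _).symm.trans (stdSimplex.sum_eq_one w)
  refine ⟨F, fun k w hk => ?_⟩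
  have w_nonneg (i) : 0 ≤ w i := stdSimplex.zero_le w i
  fin_cases k
  · change w 0 = 0 at hk
    change F w = (P 1 2).extend (w 2)
    rw [F_upper (t := ⟨w 2 + w 1 / 2, by grind, by grind⟩) rfl (by grind),
      Path.extend_trans_of_half_le _ _ (by grind)]
    congr 1
    grind
  · change w 1 = 0 at hk
    change F w = (P 0 2).extend (w 2)
    have w_two_mem : w 2 ∈ I := ⟨w_nonneg 2, stdSimplex.le_one w 2⟩
    rw [F_eq (r := 0) (t := ⟨w 2, w_two_mem⟩) (squareToTriangle_eq_iff.2
      ⟨by rw [hk, zero_div, add_zero], by rw [Set.Icc.coe_zero, zero_mul, mul_zero, hk]⟩),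
      Path.extend_apply _ w_two_mem]
    exact K.apply_zero _
  · change w 2 = 0 at hk
    change F w = (P 0 1).extend (w 1)
    rw [F_upper (t := ⟨w 2 + w 1 / 2, by grind, by grind⟩) rfl (by grind),
      Path.extend_trans_of_le_half _ _ (by grind)]
    congr 1
    grind

end Triangle

namespace MilnorJoin

section Edge

variable {S : Type*} {x : MilnorJoin S} {a b : S × ℕ}

/-- The point `x` lies on the edge joining `a` to `b`, oriented towards the larger colour. -/
structure IsOnEdge (x : MilnorJoin S) (a b : S × ℕ) : Prop where
  lt : a.2 < b.2
  eq_or_eq : ∀ p ∈ x.weights.support, p = a ∨ p = b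

theorem IsOnEdge.ne (h : IsOnEdge x a b) : a ≠ b := fun hab => h.lt.ne (congrArg Prod.snd hab)

theorem IsOnEdge.weights_add_weights (h : IsOnEdge x a b) : x.weights a + x.weights b = 1 := by
  classical
  rw [← Finset.sum_pair h.ne]
  refine sum_weights_of_support_subset fun p hp => ?_
  rw [Finset.mem_insert, Finset.mem_singleton]
  exact h.eq_or_eq p hp

theorem IsOnEdge.weights_eq_zero_or_one (h : IsOnEdge x a b)
    (hab : a ∉ x.weights.support ∨ b ∉ x.weights.support) : x.weights b = 0 ∨ x.weights b = 1 := by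
  have add_eq := h.weights_add_weights
  rcases hab with h | h
  · rw [Finsupp.notMem_support_iff.1 h, zero_add] at add_eq
    exact Or.inr add_eq
  · exact Or.inl (Finsupp.notMem_support_iff.1 h)

theorem IsOnEdge.extend_eq_base {Y : Type*} [TopologicalSpace Y] {y₀ : Y}
    (h : IsOnEdge x a b) (hab : a ∉ x.weights.support ∨ b ∉ x.weights.support)
    (γ : Path y₀ y₀) :
    γ.extend (x.weights b) = y₀ := by
  rcases h.weights_eq_zero_or_one hab with hb | hb
  · rw [hb, γ.extend_zero]
  · rw [hb, γ.extend_one]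

theorem exists_equiv_fin_strictMono {s : Face S} {n : ℕ} (hs : s.1.card = n) :
    ∃ e : Fin n ≃ s.1, StrictMono fun i => (e i).1.2 := by
  let _ : LinearOrder s.1 := LinearOrder.lift' (fun p => p.1.2) (Set.injOn_iff_injective.1 s.2)
  let e := Fintype.orderIsoFinOfCardEq s.1 ((Fintype.card_coe _).trans hs)
  exact ⟨e.toEquiv, e.strictMono⟩

theorem exists_isOnEdge [Nonempty S] {s : Face S} (hs : s.1.card ≤ 2) :
    ∃ a b, ∀ x : MilnorJoin S, x.weights.support ⊆ s.1 → IsOnEdge x a b := by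
  rcases hs.lt_or_eq with hs | hs
  · obtain ⟨p, hp⟩ := Finset.card_le_one_iff_subset_singleton.1 (Nat.le_of_lt_succ hs)
    exact ⟨p, (p.1, p.2 + 1), fun x hx => ⟨Nat.lt_succ_self _, fun q hq =>
      Or.inl (Finset.mem_singleton.1 (hp (hx hq)))⟩⟩
  · obtain ⟨e, he⟩ := exists_equiv_fin_strictMono hs
    refine ⟨e 0, e 1, fun x hx => ⟨he Fin.zero_lt_one, fun q hq => ?_⟩⟩
    obtain ⟨i, hi⟩ := e.surjective ⟨q, hx hq⟩
    obtain rfl : (e i).1 = q := congrArg Subtype.val hi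
    fin_cases i
    · exact Or.inl rfl
    · exact Or.inr rfl

theorem isOnEdge_vertex (hab : a.2 < b.2) : IsOnEdge (vertex a) a b where
  lt := hab
  eq_or_eq _ hp := Or.inl (Finset.mem_singleton.1 (Finsupp.support_single_subset hp))

theorem snd_ne_of_mem_support_vertex (hab : a.2 < b.2) :
    ∀ p ∈ (vertex a).weights.support, p.2 ≠ b.2 := fun p hp => by
  obtain rfl := Finset.mem_singleton.1 (Finsupp.support_single_subset hp)
  exact hab.ne

theorem exists_isOnEdge_succAbove {s : Face S} {e : Fin 3 ≃ s.1}
    (he : StrictMono fun i => (e i).1.2) (hx : x.weights.support ⊂ s.1) :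
    ∃ k : Fin 3, x.weights (e k) = 0 ∧ IsOnEdge x (e (k.succAbove 0)) (e (k.succAbove 1)) := by
  obtain ⟨p, hp, hpx⟩ := Finset.exists_of_ssubset hx
  obtain ⟨k, hk⟩ := e.surjective ⟨p, hp⟩
  obtain rfl : (e k).1 = p := congrArg Subtype.val hk
  refine ⟨k, Finsupp.notMem_support_iff.1 hpx, he (k.strictMono_succAbove Fin.zero_lt_one),
    fun q hq => ?_⟩
  obtain ⟨i, hi⟩ := e.surjective ⟨q, hx.subset hq⟩
  obtain rfl : (e i).1 = q := congrArg Subtype.val hi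
  have hik : i ≠ k := fun h => hpx (h ▸ hq)
  obtain ⟨j, rfl⟩ := Fin.exists_succAbove_eq hik
  fin_cases j
  · exact Or.inl rfl
  · exact Or.inr rfl

/-- The edge from `a` to `b` as a path. -/
def edge (hab : a.2 < b.2) : Path (vertex a) (vertex b) where
  toFun := (vertex a).lineTo b (snd_ne_of_mem_support_vertex hab)
  continuous_toFun := by
    classical
    refine continuous_of_support_subset _ (support_lineTo_subset b _ _) fun p => ?_
    simp only [weights_lineTo, Finsupp.single_apply]
    split_ifs <;> fun_prop
  source' := lineTo_zero _ _ _
  target' := lineTo_one _ _ _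

theorem weights_edge (hab : a.2 < b.2) (t : unitInterval) : (edge hab t).weights b = t := by
  have hne : b ≠ a := fun h => hab.ne' (congrArg Prod.snd h)
  change (1 - t : ℝ) * Finsupp.single a (1 : ℝ) b + Finsupp.single b (t : ℝ) b = t
  rw [Finsupp.single_eq_of_ne hne, mul_zero, zero_add, Finsupp.single_eq_same]

theorem isOnEdge_edge (hab : a.2 < b.2) (t : unitInterval) : IsOnEdge (edge hab t) a b where
  lt := hab
  eq_or_eq p hp := by
    classical
    have p_mem := support_lineTo_subset b _ (snd_ne_of_mem_support_vertex hab) t hp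
    exact (Finset.mem_insert.1 p_mem).symm.imp_left fun h =>
      Finset.mem_singleton.1 (Finsupp.support_single_subset h)

end Edge

section EdgeMap

variable {G : Type*} [Group G] {Y : Type*} [TopologicalSpace Y] {y₀ : Y} (loop : G → Path y₀ y₀)
  {x : MilnorJoin G} {a b : G × ℕ}

open Classical in
/-- The map from the `1`-skeleton of `EG` which sends the vertices to `y₀` and traverses
`loop (b⁻¹ a)` along the edge from `a` to `b`. -/
def edgeMap (x : MilnorJoin G) : Y :=
  if h : ∃ p : (G × ℕ) × (G × ℕ), IsOnEdge x p.1 p.2 then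
    (loop (h.choose.2.1⁻¹ * h.choose.1.1)).extend (x.weights h.choose.2)
  else y₀

theorem IsOnEdge.edgeMap_eq (h : IsOnEdge x a b) :
    edgeMap loop x = (loop (b.1⁻¹ * a.1)).extend (x.weights b) := by
  have hex : ∃ p : (G × ℕ) × (G × ℕ), IsOnEdge x p.1 p.2 := ⟨(a, b), h⟩
  rw [edgeMap, dif_pos hex]
  have h' := hex.choose_spec
  generalize hex.choose = p at h'
  obtain ⟨a', b'⟩ := p
  by_cases hab : a ∈ x.weights.support ∧ b ∈ x.weights.support
  · obtain ⟨rfl, rfl⟩ : a = a' ∧ b = b' := by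
      grind [h.lt, h'.lt, h'.eq_or_eq a hab.1, h'.eq_or_eq b hab.2]
    rfl
  · have hab' : a' ∉ x.weights.support ∨ b' ∉ x.weights.support := by
      grind [h.lt, h'.lt, h.eq_or_eq a', h.eq_or_eq b']
    rw [h.extend_eq_base (not_and_or.1 hab), h'.extend_eq_base hab']

theorem IsOnEdge.smul (h : IsOnEdge x a b) (g : G) :
    IsOnEdge (g • x) (g * a.1, a.2) (g * b.1, b.2) where
  lt := h.lt
  eq_or_eq q hq := (h.eq_or_eq _ (mem_support_smul.1 hq)).imp
    (fun h => by rw [← h, mul_inv_cancel_left]) fun h => by rw [← h, mul_inv_cancel_left]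

theorem edgeMap_smul (g : G) (hx : x.weights.support.card ≤ 2) :
    edgeMap loop (g • x) = edgeMap loop x := by
  obtain ⟨a, b, hab⟩ := exists_isOnEdge (s := x.carrier) hx
  have h := hab x subset_rfl
  rw [h.edgeMap_eq, (h.smul g).edgeMap_eq, weights_smul, smul_eq_mul, inv_mul_cancel_left]
  group

theorem edgeMap_vertex (p : G × ℕ) : edgeMap loop (vertex p) = y₀ := by
  have h : IsOnEdge (vertex p) p (p.1, p.2 + 1) := isOnEdge_vertex (Nat.lt_succ_self _)
  rw [h.edgeMap_eq]
  exact h.extend_eq_base (Or.inr fun hp =>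
    h.ne (Finset.mem_singleton.1 (Finsupp.support_single_subset hp)).symm) _

theorem isEquivariantOnSkeleton_edgeMap [MulAction G Y] (smul_eq : ∀ (g : G) (y : Y), g • y = y) :
    IsEquivariantOnSkeleton 2 (edgeMap loop) where
  map_smul g x hx := (edgeMap_smul loop g hx).trans (smul_eq g _).symm
  continuous_comp_ofFace s hs := by
    obtain ⟨a, b, hab⟩ := exists_isOnEdge hs
    exact ((Path.continuous_extend _).comp ((continuous_weights b).comp
      (continuous_ofFace s))).congr fun w =>
        ((hab _ (support_ofFace_subset s w)).edgeMap_eq loop).symm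

variable {loop}

theorem exists_extension_triangle
    (loop_mul : ∀ g h, (loop (g * h)).Homotopic ((loop h).trans (loop g))) {s : Face G}
    (hs : s.1.card = 3) {f : MilnorJoin G → Y}
    (hf : ∀ x : MilnorJoin G, x.weights.support.card ≤ 2 → f x = edgeMap loop x) :
    ∃ F : MilnorJoin G → Y, Continuous (F ∘ ofFace s) ∧
      ∀ x : MilnorJoin G, x.weights.support ⊂ s.1 → F x = f x := by
  obtain ⟨e, he⟩ := exists_equiv_fin_strictMono hs
  obtain ⟨F, hF⟩ := exists_triangle_filling (fun i j => loop ((e j).1.1⁻¹ * (e i).1.1)) <| by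
    convert loop_mul ((e 2).1.1⁻¹ * (e 1).1.1) ((e 1).1.1⁻¹ * (e 0).1.1) using 2
    group
  let coords (w : stdSimplex ℝ s.1) : stdSimplex ℝ (Fin 3) :=
    ⟨w ∘ e, fun i => w.2.1 _, (e.sum_comp w).trans w.2.2⟩
  have coords_continuous : Continuous coords := by
    refine Continuous.subtype_mk (continuous_pi fun i => ?_) _
    exact (continuous_apply (e i)).comp continuous_subtype_val
  have extend_ofFace (w) :
      Function.extend (ofFace s) (F ∘ coords) f (ofFace s w) = F (coords w) :=
    (ofFace_injective s).extend_apply _ _ w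
  refine ⟨Function.extend (ofFace s) (F ∘ coords) f,
    (F.continuous.comp coords_continuous).congr fun w => (extend_ofFace w).symm, fun x hx => ?_⟩
  obtain ⟨k, hk, h⟩ := exists_isOnEdge_succAbove he hx
  have card_le : x.weights.support.card ≤ 2 :=
    Nat.le_of_lt_succ ((Finset.card_lt_card hx).trans_eq hs)
  rw [hf x card_le, h.edgeMap_eq]
  have h_F := hF k (coords (x.toFace s hx.subset)) hk
  rw [← extend_ofFace, ofFace_toFace] at h_F
  exact h_F

end EdgeMap

end MilnorJoin

/-! ### Comparison of models of `BG` -/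

section Loops

variable {Y : Type} [TopologicalSpace Y] {y₀ : Y}

theorem pathToPi1_trans (p q : Path y₀ y₀) :
    pathToPi1 ⟦p.trans q⟧ = pathToPi1 ⟦q⟧ * pathToPi1 ⟦p⟧ := rfl

theorem pathToPi1_symm (p : Path y₀ y₀) : pathToPi1 ⟦p.symm⟧ = (pathToPi1 ⟦p⟧)⁻¹ := rfl

theorem pathToPi1_eq_iff {p q : Path y₀ y₀} : pathToPi1 ⟦p⟧ = pathToPi1 ⟦q⟧ ↔ p.Homotopic q :=
  ⟨fun h => Quotient.exact (congrArg (FundamentalGroup.toPath (X := TopCat.of Y)) h),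
    fun h => congrArg pathToPi1 (Quotient.sound h)⟩

theorem exists_pathToPi1_eq (a : FundamentalGroup Y y₀) : ∃ p, pathToPi1 ⟦p⟧ = a := by
  obtain ⟨p, hp⟩ := Quotient.exists_rep (FundamentalGroup.toPath (X := TopCat.of Y) a)
  exact ⟨p, congrArg (FundamentalGroup.fromPath (X := TopCat.of Y)) hp⟩

theorem homotopic_of_map_eq {E : Type*} [TopologicalSpace E] [SimplyConnectedSpace E] {f : E → Y}
    (hf : Continuous f) {x x' : E} {P P' : Path x x'} {y y' : Y} {γ γ' : Path y y'}
    (hγ : ∀ t, f (P t) = γ t) (hγ' : ∀ t, f (P' t) = γ' t) : γ.Homotopic γ' := by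
  obtain rfl : f x = y := by rw [← P.source, hγ, γ.source]
  obtain rfl : f x' = y' := by rw [← P.target, hγ, γ.target]
  obtain rfl : P.map hf = γ := Path.ext (funext hγ)
  obtain rfl : P'.map hf = γ' := Path.ext (funext hγ')
  exact (SimplyConnectedSpace.paths_homotopic P P').map ⟨f, hf⟩

end Loops

theorem exists_mem_le_of_sInf_le {s : Set ℕ∞} {n : ℕ} (h : sInf s ≤ n) : ∃ c ∈ s, c ≤ n := by
  rcases s.eq_empty_or_nonempty with rfl | hs
  · exact absurd (top_le_iff.1 (sInf_empty.symm.trans_le h)) (ENat.natCast_ne_top n)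
  · exact ⟨_, csInf_mem hs, h⟩

namespace MilnorJoin

section Comparison

open Metric

variable {G : Type} [Group G]

theorem card_support_vertex {S : Type*} (p : S × ℕ) : (vertex p).weights.support.card = 1 := by
  change (Finsupp.single p (1 : ℝ)).support.card = 1
  rw [Finsupp.support_single p one_ne_zero, Finset.card_singleton]

theorem card_support_edge_le {S : Type*} {a b : S × ℕ} (hab : a.2 < b.2) (t : unitInterval) :
    (edge hab t).weights.support.card ≤ 2 := by
  classical
  refine (Finset.card_le_card fun p hp => ?_).trans (Finset.card_le_two (a := a) (b := b))
  exact Finset.mem_insert.2 (((isOnEdge_edge hab t).eq_or_eq p hp).imp_right Finset.mem_singleton.2)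

theorem smul_vertex (g : G) (p : G × ℕ) : g • vertex p = vertex (g * p.1, p.2) := by
  ext q
  simp only [smul_def, map, vertex, Convexity.StdSimplex.map_single, smul_eq_mul]
  rfl

theorem exists_boundarySphere_eq_vertex {S : Type*} {s : Face S} {n : ℕ}
    (hs : s.1.card = n + 2) : ∃ z p, boundarySphere hs z = vertex p := by
  obtain ⟨p, hp⟩ := Finset.card_ne_zero.1 (hs.trans_ne (n + 1).succ_ne_zero)
  have support_ssubset : (vertex p).weights.support ⊂ s.1 := by
    refine (Finsupp.support_single_subset.trans
      (Finset.singleton_subset_iff.2 hp)).ssubset_of_ne fun h => ?_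
    have card_eq : s.1.card = 1 := h ▸ card_support_vertex p
    lia
  exact (exists_boundarySphere_eq hs support_ssubset).imp fun _ h => ⟨p, h⟩

theorem exists_invariant_map_of_loop {Y : Type} [TopologicalSpace Y] {y₀ : Y}
    (hY : ∀ n, 2 ≤ n → Subsingleton (HomotopyGroup.Pi n Y y₀)) {loop : G → Path y₀ y₀}
    (loop_mul : ∀ g h, (loop (g * h)).Homotopic ((loop h).trans (loop g))) :
    ∃ f : MilnorJoin G → Y, Continuous f ∧ (∀ (g : G) x, f (g • x) = f x) ∧
      ∀ x : MilnorJoin G, x.weights.support.card ≤ 2 → f x = edgeMap loop x := by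
  let _ : MulAction G Y :=
    { smul := fun _ y => y, one_smul := fun _ => rfl, mul_smul := fun _ _ _ => rfl }
  have : ContinuousConstSMul G Y := ⟨fun _ => continuous_id⟩
  refine (isEquivariantOnSkeleton_edgeMap loop fun _ _ => rfl).exists_equivariant
    fun n hn f hf hf_eq s hs => ?_
  rcases hn.eq_or_lt with rfl | hn
  · exact exists_extension_triangle loop_mul hs hf_eq
  · obtain ⟨m, rfl⟩ := Nat.exists_eq_add_of_lt hn
    obtain ⟨z, p, hz⟩ := exists_boundarySphere_eq_vertex hs
    have base_eq : hf.boundaryMap hs z = y₀ := by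
      change f (boundarySphere hs z) = y₀
      rw [hz, hf_eq _ (card_support_vertex p ▸ one_le_two), edgeMap_vertex]
    exact hf.exists_extension_face hs (nullhomotopic_of_subsingleton_homotopyGroup (by lia) _
      (base_eq ▸ hY (2 + m) (Nat.le_add_right 2 m)))

theorem exists_isClassifyingMap (Y : ClassifyingModel G) :
    ∃ f, IsClassifyingMap Y.iso (basepoint G) f := by
  choose loop hloop using fun g => exists_pathToPi1_eq (Y.iso.symm g)
  have iso_loop (g : G) : Y.iso (pathToPi1 ⟦loop g⟧) = g := by rw [hloop, Y.iso.apply_symm_apply]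
  obtain ⟨f, f_continuous, f_smul, f_eq⟩ := exists_invariant_map_of_loop Y.aspherical
    (loop := loop) fun g h => pathToPi1_eq_iff.1 <| by
      rw [pathToPi1_trans, hloop, hloop, hloop, map_mul]
  have f_edge (g : G) (t) : f (edge (a := (g, 0)) (b := (1, 1)) Nat.zero_lt_one t) = loop g t := by
    rw [f_eq _ (card_support_edge_le _ t), (isOnEdge_edge _ t).edgeMap_eq, weights_edge,
      inv_one, one_mul, Path.extend_extends']
  refine ⟨f, f_continuous, f_smul, ?_, fun g P γ hγ => ?_⟩
  · rw [basepoint, f_eq _ (card_support_vertex _ ▸ one_le_two), edgeMap_vertex]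
  · let e₁ : Path (vertex ((1 : G), 0)) (vertex (1, 1)) := edge Nat.zero_lt_one
    let e₂ : Path (vertex (g, 0)) (vertex ((1 : G), 1)) := edge Nat.zero_lt_one
    let P' : Path (basepoint G) (g • basepoint G) :=
      (e₁.trans e₂.symm).cast rfl ((smul_vertex g _).trans (by rw [mul_one]))
    have γ_homotopic : γ.Homotopic ((loop 1).trans (loop g).symm) := by
      refine homotopic_of_map_eq f_continuous hγ (P' := P') fun t => ?_
      change f ((e₁.trans e₂.symm) t) = _
      rw [Path.trans_apply, Path.trans_apply]
      split_ifs <;> exact f_edge _ _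
    rw [pathToPi1_eq_iff.2 γ_homotopic, pathToPi1_trans, pathToPi1_symm, map_mul, map_inv,
      iso_loop, iso_loop, mul_one]

theorem exists_isAdmissible_cover_of_catGroup_le {F : Set (Subgroup G)} {n : ℕ}
    (h : catGroup G F ≤ n) : ∃ V : Fin (n + 1) → Set (MilnorJoin G),
      (∀ j, IsAdmissible F (V j)) ∧ ∀ x, ∃ j, x ∈ V j := by
  obtain ⟨c, ⟨Y, rfl⟩, hY⟩ := exists_mem_le_of_sInf_le h
  obtain ⟨c, ⟨m, rfl, U, U_open, U_cover, hU⟩, hm⟩ := exists_mem_le_of_sInf_le hY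
  have := Y.pathConnected
  obtain ⟨f, hf⟩ := exists_isClassifyingMap Y
  have hm' : m + 1 ≤ n + 1 := Nat.add_le_add_right (ENat.natCast_le_natCast.1 hm) 1
  let r : Fin (n + 1) → Fin (m + 1) := Function.invFun (Fin.castLE hm')
  have r_surjective : Function.Surjective r :=
    Function.invFun_surjective (Fin.castLE_injective hm')
  refine ⟨fun j => f ⁻¹' U (r j), fun j => hf.isAdmissible_preimage (U_open _) (hU _), fun x => ?_⟩
  obtain ⟨i, hi⟩ := U_cover (f x)
  obtain ⟨j, rfl⟩ := r_surjective i
  exact ⟨j, hi⟩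

end Comparison

end MilnorJoin

/-! ### Orbit decompositions -/

section OrbitDecomposition

variable {G : Type} [Group G] {ι : Type*} {K : ι → Subgroup G} {E : Type*} [TopologicalSpace E]

/-- Disjoint open subsets of a `G`-space, indexed by the cosets of the subgroups `K i` and permuted
by `G` in the same way as these cosets. Their union is the disjoint union over `i` of the `G`-spaces
induced from the `K i`-spaces `O ⟨i, 1⟩`. -/
structure IsOrbitDecomposition [SMul G E] (O : (Σ i, G ⧸ K i) → Set E) : Prop where
  isOpen : ∀ p, IsOpen (O p)
  eq_of_mem : ∀ x p q, x ∈ O p → x ∈ O q → p = q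
  smul_mem : ∀ (g : G) p x, x ∈ O p → g • x ∈ O (g • p)

namespace IsOrbitDecomposition

variable {O : (Σ i, G ⧸ K i) → Set E}

theorem preimage [SMul G E] (hO : IsOrbitDecomposition O) {E' : Type*} [TopologicalSpace E']
    [SMul G E'] {f : E' → E} (hf : Continuous f) (hf_smul : ∀ (g : G) x, f (g • x) = g • f x) :
    IsOrbitDecomposition fun p => f ⁻¹' O p where
  isOpen p := (hO.isOpen p).preimage hf
  eq_of_mem x := hO.eq_of_mem (f x)
  smul_mem g p x hx := Set.mem_preimage.2 (hf_smul g x ▸ hO.smul_mem g p _ hx)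

theorem mem_of_path [SMul G E] (hO : IsOrbitDecomposition O) {x y : E} (P : Path x y)
    (hP : ∀ t, ∃ q, P t ∈ O q) {p : Σ i, G ⧸ K i} (hx : x ∈ O p) (t : unitInterval) :
    P t ∈ O p := by
  have range_subset : Set.range P ⊆ O p ∪ ⋃ q ≠ p, O q := by
    rintro _ ⟨t, rfl⟩
    obtain ⟨q, hq⟩ := hP t
    rcases eq_or_ne q p with rfl | hqp
    · exact Or.inl hq
    · exact Or.inr (Set.mem_biUnion hqp hq)
  have disjoint : Disjoint (O p) (⋃ q ≠ p, O q) :=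
    Set.disjoint_iUnion₂_right.2 fun q hqp =>
      Set.disjoint_left.2 fun z hzp hzq => hqp (hO.eq_of_mem z q p hzq hzp)
  exact (isPreconnected_range P.continuous).subset_left_of_subset_union (hO.isOpen p)
    (isOpen_biUnion fun q _ => hO.isOpen q) disjoint range_subset
    ⟨x, ⟨0, P.source⟩, hx⟩ (Set.mem_range_self t)

variable [MulAction G E] {i : ι} {g : G} {x : E}

theorem conj_mem (hO : IsOrbitDecomposition O) {h : G} (hx : x ∈ O ⟨i, g⟩)
    (hhx : h • x ∈ O ⟨i, g⟩) : g⁻¹ * (h * g) ∈ K i :=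
  QuotientGroup.eq.1 <| eq_of_heq
    (Sigma.mk.inj (hO.eq_of_mem _ _ _ hhx (hO.smul_mem h _ x hx))).2

end IsOrbitDecomposition

variable {E' : ι → Type*} [MulAction G E]

/-- The `G`-invariant set whose part in `O ⟨i, g⟩` is the `g`-translate of the preimage of `W i`
under the `K i`-equivariant map `φ i`. -/
def inducedSet (O : (Σ i, G ⧸ K i) → Set E) (φ : ∀ i, E → E' i) (W : ∀ i, Set (E' i)) : Set E :=
  {x | ∃ (i : ι) (g : G), x ∈ O ⟨i, g⟩ ∧ φ i (g⁻¹ • x) ∈ W i}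

variable [∀ i, MulAction (K i) (E' i)]
  {O : (Σ i, G ⧸ K i) → Set E} {φ : ∀ i, E → E' i} {F : Set (Subgroup G)} {W : ∀ i, Set (E' i)}

theorem IsOrbitDecomposition.mem_inducedSet_iff (hO : IsOrbitDecomposition O)
    (φ_smul : ∀ i (k : K i) x, φ i ((k : G) • x) = k • φ i x)
    (hW : ∀ i (k : K i), ∀ y ∈ W i, k • y ∈ W i) {i : ι} {g : G} {x : E} (hx : x ∈ O ⟨i, g⟩) :
    x ∈ inducedSet O φ W ↔ φ i (g⁻¹ • x) ∈ W i := by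
  refine ⟨fun ⟨j, h, hxh, hxW⟩ => ?_, fun hxW => ⟨i, g, hx, hxW⟩⟩
  obtain ⟨rfl, hgh⟩ := Sigma.mk.inj (hO.eq_of_mem x _ _ hx hxh)
  let k : K i := ⟨g⁻¹ * h, QuotientGroup.eq.1 (eq_of_heq hgh)⟩
  have smul_eq : (k : G) • h⁻¹ • x = g⁻¹ • x := by
    rw [smul_smul, mul_assoc, mul_inv_cancel, mul_one]
  rw [← smul_eq, φ_smul]
  exact hW i k _ hxW

theorem IsOrbitDecomposition.isAdmissible_inducedSet [∀ i, TopologicalSpace (E' i)]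
    [ContinuousConstSMul G E] (hO : IsOrbitDecomposition O)
    (hF : ∀ H ∈ F, ∀ g : G, H.map (MulAut.conj g).toMonoidHom ∈ F)
    (φ_continuous : ∀ i, Continuous (φ i))
    (φ_smul : ∀ i (k : K i) x, φ i ((k : G) • x) = k • φ i x)
    (hW : ∀ i, IsAdmissible (restrictFamily F (K i)) (W i)) :
    IsAdmissible F (inducedSet O φ W) where
  isOpen := by
    simp only [inducedSet, Set.ofPred_exists]
    exact isOpen_iUnion fun i => isOpen_iUnion fun g => (hO.isOpen _).inter
      ((hW i).isOpen.preimage ((φ_continuous i).comp (continuous_const_smul _)))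
  smul_mem g x := fun ⟨i, h, hx, hxW⟩ => ⟨i, g * h, hO.smul_mem g _ x hx, by
    rwa [mul_inv_rev, mul_smul, inv_smul_smul]⟩
  exists_mem x := by
    rintro ⟨i, g, hx, hxW⟩
    obtain ⟨H, hH, mem_H⟩ := (hW i).exists_mem _ hxW
    refine ⟨_, hF _ hH g, fun h ⟨P, hP⟩ => ?_⟩
    have P_mem (t) : P t ∈ O ⟨i, g⟩ :=
      hO.mem_of_path P (fun t => let ⟨j, h, P_mem, _⟩ := hP t; ⟨⟨j, h⟩, P_mem⟩) hx t
    let k : K i := ⟨g⁻¹ * (h * g), hO.conj_mem hx (P.target ▸ P_mem 1)⟩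
    have k_smul : k • φ i (g⁻¹ • x) = φ i (g⁻¹ • h • x) := by
      rw [← φ_smul, smul_smul, smul_smul, mul_assoc, mul_inv_cancel_right]
    let P' : Path (φ i (g⁻¹ • x)) (k • φ i (g⁻¹ • x)) :=
      (P.map ((φ_continuous i).comp (continuous_const_smul g⁻¹))).cast rfl k_smul
    have k_mem : k ∈ H := mem_H k ⟨P', fun t =>
      (hO.mem_inducedSet_iff φ_smul (fun i => (hW i).smul_mem) (P_mem t)).1 (hP t)⟩
    exact ⟨k, ⟨k, k_mem, rfl⟩, by simp [k, mul_assoc]⟩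

end OrbitDecomposition

section Induction

theorem exists_map_mul_eq {G : Type*} [Group G] (K : Subgroup G) :
    ∃ ρ : G → K, ∀ (k : K) (g : G), ρ (k * g) = k * ρ g := by
  obtain ⟨T, hT, -⟩ := K.exists_isComplement_right 1
  exact ⟨fun g => (hT.equiv g).1, fun k g => congrArg Prod.fst (hT.equiv_mul_left k g)⟩

variable {G : Type} [Group G]

theorem MilnorJoin.exists_subgroup_equivariant (K : Subgroup G) :
    ∃ φ : MilnorJoin G → MilnorJoin K, Continuous φ ∧ ∀ (k : K) x, φ ((k : G) • x) = k • φ x := by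
  obtain ⟨ρ, hρ⟩ := exists_map_mul_eq K
  exact ⟨map ρ, continuous_map ρ, fun k x => map_smul hρ k x⟩

theorem IsOrbitDecomposition.exists_isAdmissible_cover {ι : Type*} {K : ι → Subgroup G}
    {O : (Σ i, G ⧸ K i) → Set (MilnorJoin G)} (hO : IsOrbitDecomposition O) {F : Set (Subgroup G)}
    (hF : ∀ H ∈ F, ∀ g : G, H.map (MulAut.conj g).toMonoidHom ∈ F) {n : ℕ}
    (hn : ∀ i, catGroup (K i) (restrictFamily F (K i)) ≤ n) :
    ∃ V : Fin (n + 1) → Set (MilnorJoin G),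
      (∀ j, IsAdmissible F (V j)) ∧ ∀ p, ∀ x ∈ O p, ∃ j, x ∈ V j := by
  choose φ φ_continuous φ_smul using fun i => MilnorJoin.exists_subgroup_equivariant (K i)
  choose W hW W_cover using fun i => MilnorJoin.exists_isAdmissible_cover_of_catGroup_le (hn i)
  refine ⟨fun j => inducedSet O φ fun i => W i j,
    fun j => hO.isAdmissible_inducedSet hF φ_continuous φ_smul fun i => hW i j, ?_⟩
  rintro ⟨i, c⟩ x hx
  obtain ⟨g, rfl⟩ := QuotientGroup.mk_surjective c
  exact (W_cover i (φ i (g⁻¹ • x))).imp fun j hj => ⟨i, g, hx, hj⟩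

end Induction

/-! ### One-dimensional `G`-CW-complexes -/

namespace GCWComplex

variable {G : Type} [Group G] (X : GCWComplex G)

section Cells

/-- The characteristic map of the `n`-cell of `X` indexed by `p`, where the coset `p.2` records the
position of the cell in the orbit of the representative `p.1`. -/
def cell (n : ℕ) (p : Σ i, G ⧸ X.stab n i) : UnitDisk n → X.space := X.charMap n p.1 p.2

/-- The open `n`-cell of `X` indexed by `p`. -/
def openCell (n : ℕ) (p : Σ i, G ⧸ X.stab n i) : Set X.space := X.cell n p '' {z | ‖z.1‖ < 1}

variable {X} {n m : ℕ} {p q : Σ i, G ⧸ X.stab n i} {z w : UnitDisk n}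

theorem smul_cell (g : G) (p : Σ i, G ⧸ X.stab n i) (z : UnitDisk n) :
    g • X.cell n p z = X.cell n (g • p) z :=
  (X.charMap_equivariant n p.1 g p.2 z).symm

theorem norm_lt_one_or_eq_one (z : UnitDisk n) : ‖z.1‖ < 1 ∨ ‖z.1‖ = 1 :=
  lt_or_eq_of_le (mem_closedBall_zero_iff.1 z.2)

theorem cell_inj (hz : ‖z.1‖ < 1) (hw : ‖w.1‖ < 1) (h : X.cell n p z = X.cell n q w) :
    p = q ∧ z = w := by
  obtain ⟨i, c⟩ := p
  obtain ⟨j, d⟩ := q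
  have unique := (X.partition (X.cell n ⟨j, d⟩ w)).unique (y₁ := ⟨n, i, c, z⟩)
    (y₂ := ⟨n, j, d, w⟩) ⟨hz, h⟩ ⟨hw, rfl⟩
  obtain ⟨rfl, eq⟩ := Sigma.mk.inj (eq_of_heq (Sigma.mk.inj unique).2)
  obtain ⟨rfl, rfl⟩ := Prod.mk.inj (eq_of_heq eq)
  exact ⟨rfl, rfl⟩

theorem eq_of_mem_openCell {x : X.space} {q : Σ i, G ⧸ X.stab m i} (hp : x ∈ X.openCell n p)
    (hq : x ∈ X.openCell m q) : n = m := by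
  obtain ⟨z, hz, h⟩ := hp
  obtain ⟨w, hw, h'⟩ := hq
  exact (Sigma.mk.inj ((X.partition x).unique (y₁ := ⟨n, p.1, p.2, z⟩)
    (y₂ := ⟨m, q.1, q.2, w⟩) ⟨hz, h⟩ ⟨hw, h'⟩)).1

theorem exists_mem_openCell_of_norm_eq_one (p : Σ i, G ⧸ X.stab n i) (hz : ‖z.1‖ = 1) :
    ∃ m < n, ∃ q, X.cell n p z ∈ X.openCell m q := by
  obtain ⟨m, hm, j, d, w, hw, h⟩ := X.sphere_le n p.1 p.2 z hz
  exact ⟨m, hm, ⟨j, d⟩, w, hw, h⟩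

theorem cell_mem_openCell_iff : X.cell n p z ∈ X.openCell n q ↔ ‖z.1‖ < 1 ∧ p = q := by
  refine ⟨fun h => ?_, fun ⟨hz, hpq⟩ => hpq ▸ ⟨z, hz, rfl⟩⟩
  rcases norm_lt_one_or_eq_one z with hz | hz
  · obtain ⟨w, hw, h⟩ := h
    exact ⟨hz, (cell_inj hz hw h.symm).1⟩
  · obtain ⟨m, hm, q', hq'⟩ := exists_mem_openCell_of_norm_eq_one p hz
    exact absurd (eq_of_mem_openCell hq' h) hm.ne

theorem exists_mem_openCell {d : ℕ} (hX : X.DimLE d) (x : X.space) :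
    ∃ n ≤ d, ∃ p, x ∈ X.openCell n p := by
  obtain ⟨⟨n, i, c, z⟩, ⟨hz, hx⟩, -⟩ := X.partition x
  refine ⟨n, ?_, ⟨i, c⟩, z, hz, hx⟩
  by_contra hn
  exact (hX n (Nat.cast_lt.2 (not_le.1 hn))).false i

theorem isOpen_iff_of_dimLE {d : ℕ} (hX : X.DimLE d) {A : Set X.space} :
    IsOpen A ↔ ∀ n ≤ d, ∀ p, IsOpen (X.cell n p ⁻¹' A) := by
  refine ⟨fun hA n _ p => hA.preimage (X.charMap_continuous n p.1 p.2), fun h => ?_⟩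
  rw [← isClosed_compl_iff, X.weak_topology]
  intro n i c
  rw [Set.preimage_compl, isClosed_compl_iff]
  refine h n ?_ ⟨i, c⟩
  by_contra hn
  exact (hX n (Nat.cast_lt.2 (not_le.1 hn))).false i

theorem isOpen_openCell (hX : X.DimLE n) (q : Σ i, G ⧸ X.stab n i) : IsOpen (X.openCell n q) := by
  refine (isOpen_iff_of_dimLE hX).2 fun m hm p => ?_
  rcases hm.eq_or_lt with rfl | hm
  · simp only [Set.preimage, cell_mem_openCell_iff]
    exact (isOpen_lt (by fun_prop) continuous_const).and isOpen_const
  · convert isOpen_empty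
    refine Set.eq_empty_of_forall_notMem fun z hz => ?_
    rcases norm_lt_one_or_eq_one z with hz' | hz'
    · exact hm.ne (eq_of_mem_openCell ⟨z, hz', rfl⟩ hz)
    · obtain ⟨k, hk, q', hq'⟩ := exists_mem_openCell_of_norm_eq_one p hz'
      exact (hk.trans hm).ne (eq_of_mem_openCell hq' hz)

theorem isOrbitDecomposition_openCell (hX : X.DimLE n) :
    IsOrbitDecomposition (X.openCell n) where
  isOpen := isOpen_openCell hX
  eq_of_mem x p q := by
    rintro ⟨z, _, rfl⟩ hq
    exact (cell_mem_openCell_iff.1 hq).2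
  smul_mem g p x := by
    rintro ⟨z, hz, rfl⟩
    exact ⟨z, hz, (smul_cell g p z).symm⟩

end Cells

section Star

/-- The end of the interval `D¹` nearest to `z`; the midpoint is its own `endpoint`. -/
def endpoint (z : UnitDisk 1) : UnitDisk 1 :=
  ⟨EuclideanSpace.single 0 (SignType.sign (z.1 0) : ℝ), by
    cases h : SignType.sign (z.1 0) <;> simp [UnitDisk]⟩

theorem endpoint_of_norm_eq_one {z : UnitDisk 1} (hz : ‖z.1‖ = 1) : endpoint z = z := by
  have abs_eq : |z.1 0| = 1 := by
    rw [← hz, EuclideanSpace.norm_eq, Fin.sum_univ_one, Real.sqrt_sq (norm_nonneg _),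
      Real.norm_eq_abs]
  ext i
  rw [Subsingleton.elim i 0]
  simpa [abs_eq, endpoint] using sign_mul_abs (z.1 0)

theorem norm_endpoint_lt_one {z : UnitDisk 1} (hz : z.1 0 = 0) : ‖(endpoint z).1‖ < 1 := by
  simp [endpoint, hz]

theorem eventually_endpoint_eq {z : UnitDisk 1} (hz : z.1 0 ≠ 0) :
    ∀ᶠ w in 𝓝 z, endpoint w = endpoint z := by
  have sign_continuousAt : ContinuousAt (fun w : UnitDisk 1 => SignType.sign (w.1 0)) z :=
    ContinuousAt.comp' (f := fun w : UnitDisk 1 => w.1 0) (continuousAt_sign_of_ne_zero hz)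
      (by fun_prop)
  rw [ContinuousAt, nhds_discrete SignType, Filter.tendsto_pure] at sign_continuousAt
  filter_upwards [sign_continuousAt] with w hw
  simp only [endpoint, hw]

/-- The `0`-cell of `X` indexed by `p`, as a point. -/
def vertex (p : Σ v, G ⧸ X.stab 0 v) : X.space := X.cell 0 p ⟨0, by simp [UnitDisk]⟩

/-- The open star of a vertex in a `1`-dimensional `G`-CW-complex. The midpoints of the edges are
left out, which makes the stars of different vertices disjoint. -/
def star (p : Σ v, G ⧸ X.stab 0 v) : Set X.space :=
  {x | x = X.vertex p ∨ ∃ q z, X.cell 1 q (endpoint z) = X.vertex p ∧ X.cell 1 q z = x}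

variable {X} {p p' : Σ v, G ⧸ X.stab 0 v} {q : Σ e, G ⧸ X.stab 1 e} {z : UnitDisk 1}

theorem vertex_mem_openCell (p : Σ v, G ⧸ X.stab 0 v) : X.vertex p ∈ X.openCell 0 p :=
  ⟨_, by simp, rfl⟩

theorem eq_vertex_of_mem_openCell {x : X.space} (hx : x ∈ X.openCell 0 p) : x = X.vertex p := by
  obtain ⟨z, -, rfl⟩ := hx
  exact congrArg _ (Subsingleton.elim _ _)

theorem vertex_injective : Function.Injective X.vertex := fun p _ h =>
  (cell_mem_openCell_iff.1 (h ▸ vertex_mem_openCell p)).2.symm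

theorem norm_eq_one_of_cell_eq_vertex (h : X.cell 1 q z = X.vertex p) : ‖z.1‖ = 1 :=
  (norm_lt_one_or_eq_one z).resolve_left fun hz =>
    one_ne_zero (eq_of_mem_openCell ⟨z, hz, h⟩ (vertex_mem_openCell p))

theorem cell_endpoint_eq_vertex (h : X.cell 1 q z = X.vertex p) :
    X.cell 1 q (endpoint z) = X.vertex p := by
  rwa [endpoint_of_norm_eq_one (norm_eq_one_of_cell_eq_vertex h)]

theorem cell_mem_star_iff :
    X.cell 1 q z ∈ X.star p ↔ X.cell 1 q (endpoint z) = X.vertex p := by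
  refine ⟨?_, fun h => Or.inr ⟨q, z, h, rfl⟩⟩
  rintro (h | ⟨q', z', hz', h⟩)
  · exact cell_endpoint_eq_vertex h
  · rcases norm_lt_one_or_eq_one z' with hz'_lt | hz'_eq
    · have cell_mem : X.cell 1 q z ∈ X.openCell 1 q' := ⟨z', hz'_lt, h⟩
      have hz_lt : ‖z.1‖ < 1 := (cell_mem_openCell_iff.1 cell_mem).1
      obtain ⟨rfl, rfl⟩ := cell_inj hz'_lt hz_lt h
      exact hz'
    · rw [endpoint_of_norm_eq_one hz'_eq, h] at hz'
      exact cell_endpoint_eq_vertex hz'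

theorem eq_of_vertex_mem_star (h : X.vertex p ∈ X.star p') : p = p' := by
  rcases h with h | ⟨q, z, hz, h⟩
  · exact vertex_injective h
  · exact vertex_injective (cell_endpoint_eq_vertex h ▸ hz)

theorem isOpen_star (hX : X.DimLE 1) (p : Σ v, G ⧸ X.stab 0 v) : IsOpen (X.star p) := by
  refine (isOpen_iff_of_dimLE (d := 1) (by simpa using hX)).2 fun n hn q => ?_
  interval_cases n
  · exact isOpen_discrete _
  · simp only [Set.preimage, cell_mem_star_iff]
    refine isOpen_iff_mem_nhds.2 fun z hz => ?_
    have hz0 : z.1 0 ≠ 0 := fun hz0 =>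
      (norm_endpoint_lt_one hz0).ne (norm_eq_one_of_cell_eq_vertex hz)
    filter_upwards [eventually_endpoint_eq hz0] with w hw
    exact (congrArg (X.cell 1 q) hw).trans hz

theorem isOrbitDecomposition_star (hX : X.DimLE 1) : IsOrbitDecomposition X.star where
  isOpen := isOpen_star hX
  eq_of_mem x p p' := by
    rintro (rfl | ⟨q, z, hz, rfl⟩) hp'
    · exact eq_of_vertex_mem_star hp'
    · exact vertex_injective (hz.symm.trans (cell_mem_star_iff.1 hp'))
  smul_mem g p x := by
    have smul_vertex : g • X.vertex p = X.vertex (g • p) := smul_cell g p _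
    rintro (rfl | ⟨q, z, hz, rfl⟩)
    · exact Or.inl smul_vertex
    · refine Or.inr ⟨g • q, z, ?_, (smul_cell g q z).symm⟩
      rw [← smul_cell, hz, smul_vertex]

theorem exists_mem_star_or_openCell (hX : X.DimLE 1) (x : X.space) :
    (∃ p, x ∈ X.star p) ∨ ∃ q, x ∈ X.openCell 1 q := by
  obtain ⟨n, hn, p, hp⟩ := exists_mem_openCell (d := 1) (by simpa using hX) x
  interval_cases n
  · exact Or.inl ⟨p, Or.inl (eq_vertex_of_mem_openCell hp)⟩
  · exact Or.inr ⟨p, hp⟩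

end Star

end GCWComplex

section Main

variable {G : Type} [Group G] {F : Set (Subgroup G)}

theorem IsOrbitDecomposition.exists_isAdmissible_cover_of_add_one_le {ι : Type*}
    {K : ι → Subgroup G} {O : (Σ i, G ⧸ K i) → Set (MilnorJoin G)} (hO : IsOrbitDecomposition O)
    (hF : ∀ H ∈ F, ∀ g : G, H.map (MulAut.conj g).toMonoidHom ∈ F) {m : ℕ}
    (hm : ∀ i, catGroup (K i) (restrictFamily F (K i)) + 1 ≤ m) :
    ∃ V : Fin m → Set (MilnorJoin G),
      (∀ j, IsAdmissible F (V j)) ∧ ∀ p, ∀ x ∈ O p, ∃ j, x ∈ V j := by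
  cases m with
  | zero => exact ⟨Fin.elim0, fun j => j.elim0, fun p => by simpa using hm p.1⟩
  | succ n =>
    refine hO.exists_isAdmissible_cover hF fun i =>
      (ENat.add_le_add_iff_right ENat.one_ne_top).1 ?_
    exact_mod_cast hm i

theorem MilnorJoin.catGroup_le_of_isAdmissible_sum {n m : ℕ} {V : Fin (n + 1) → Set (MilnorJoin G)}
    {W : Fin m → Set (MilnorJoin G)} (hV : ∀ j, IsAdmissible F (V j))
    (hW : ∀ j, IsAdmissible F (W j)) (cover : ∀ x, (∃ j, x ∈ V j) ∨ ∃ j, x ∈ W j) :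
    catGroup G F ≤ (n + m : ℕ) := by
  let e : Fin (n + m + 1) ≃ Fin (n + 1) ⊕ Fin m :=
    (finCongr (Nat.add_right_comm n m 1)).trans finSumFinEquiv.symm
  have admissible : ∀ k, IsAdmissible F (Sum.elim V W k) := Sum.forall.2 ⟨hV, hW⟩
  refine catGroup_le_of_isAdmissible (V := fun i => Sum.elim V W (e i))
    (fun i => admissible (e i)) fun x => ?_
  obtain ⟨k, hk⟩ : ∃ k, x ∈ Sum.elim V W k := Sum.exists.2 (cover x)
  exact ⟨e.symm k, by rwa [e.apply_symm_apply]⟩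

theorem GCWComplex.catGroup_le_add (hF : ∀ H ∈ F, ∀ g : G, H.map (MulAut.conj g).toMonoidHom ∈ F)
    {X : GCWComplex G} [ContractibleSpace X.space] (hX : X.DimLE 1) {n m : ℕ}
    (hn : ∀ v, catGroup (X.stab 0 v) (restrictFamily F (X.stab 0 v)) ≤ n)
    (hm : ∀ e, catGroup (X.stab 1 e) (restrictFamily F (X.stab 1 e)) + 1 ≤ m) :
    catGroup G F ≤ (n + m : ℕ) := by
  have : ContinuousConstSMul G X.space := ⟨X.continuous_smul⟩
  obtain ⟨f, hf, f_smul⟩ := MilnorJoin.exists_equivariant_of_contractibleSpace (G := G)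
    (Z := X.space)
  obtain ⟨V, hV, V_cover⟩ := (isOrbitDecomposition_star hX).preimage hf f_smul
    |>.exists_isAdmissible_cover hF hn
  obtain ⟨W, hW, W_cover⟩ := (isOrbitDecomposition_openCell (n := 1) (by simpa using hX)).preimage
    hf f_smul |>.exists_isAdmissible_cover_of_add_one_le hF hm
  refine MilnorJoin.catGroup_le_of_isAdmissible_sum hV hW fun x => ?_
  exact (exists_mem_star_or_openCell hX (f x)).imp
    (fun ⟨p, hp⟩ => V_cover p x hp) fun ⟨q, hq⟩ => W_cover q x hq

theorem catF_graph_of_groups_sum_general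
    (hF : ∀ H ∈ F, ∀ g : G, H.map (MulAut.conj g).toMonoidHom ∈ F) (X : GCWComplex G)
    [ContractibleSpace X.space] (hdim : X.DimLE 1) :
    catGroup G F ≤
      (⨆ v : X.cells 0, catGroup ↥(X.stab 0 v) (restrictFamily F (X.stab 0 v))) +
        ⨆ e : X.cells 1, (catGroup ↥(X.stab 1 e) (restrictFamily F (X.stab 1 e)) + 1) := by
  cases ha : ⨆ v : X.cells 0, catGroup ↥(X.stab 0 v) (restrictFamily F (X.stab 0 v)) with
  | top => simp
  | coe n =>
    cases hb : ⨆ e : X.cells 1, (catGroup ↥(X.stab 1 e) (restrictFamily F (X.stab 1 e)) + 1) with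
    | top => simp
    | coe m =>
      exact_mod_cast GCWComplex.catGroup_le_add hF hdim (iSup_le_iff.1 ha.le)
        (iSup_le_iff.1 hb.le)

end Main

/-- **`cat_F` of graphs of groups (sum version).**
By Bass–Serre theory, `G` is the fundamental group of a graph of groups with vertex groups
`(G_v)_{v ∈ V}` and edge groups `(G_e)_{e ∈ E}` if and only if `G` acts on a tree — that is, a
contractible `1`-dimensional `G`-CW-complex `X` — with `V` the orbit representatives of the
vertices, `E` the orbit representatives of the edges, and `(G_v)`, `(G_e)` the corresponding
stabilisers.  We use this encoding: `V = X.cells 0`, `E = X.cells 1`, `G_v = X.stab 0 v`,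
`G_e = X.stab 1 e`.  Then
`cat_F(G) ≤ sup_{v ∈ V} cat_{F|_{G_v}}(G_v) + sup_{e ∈ E} (cat_{F|_{G_e}}(G_e) + 1)`. -/
theorem catF_graph_of_groups_sum (G : Type) [Group G] (F : Set (Subgroup G))
    (hF : IsSubgroupFamily F) (X : GCWComplex G) (hX : ContractibleSpace X.space)
    (hdim : X.DimLE 1) :
    catGroup G F ≤
      (⨆ v : X.cells 0, catGroup ↥(X.stab 0 v) (restrictFamily F (X.stab 0 v))) +
        ⨆ e : X.cells 1, (catGroup ↥(X.stab 1 e) (restrictFamily F (X.stab 1 e)) + 1) :=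
  catF_graph_of_groups_sum_general hF.conj_mem X hdim

end
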